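/- Let A be a commutative Noetherian local ring which is a complete intersection: there exist a regular local ring S and a regular sequence x_1, …, x_c contained in the maximal ideal of S such that the completion of A with respect to its maximal ideal is isomorphic to S/(x_1, …, x_c). Let M and N be finitely generated A-modules such that the tensor product M ⊗_A N has finite length. Then either Tor_n^A(M, N) = 0 for all sufficiently large n, or there exists a non-negative integer m_0 such that Tor_n^A(M, N) ≠ 0 for all even integers n ≥ m_0, or Tor_n^A(M, N) ≠ 0 for all odd integers n ≥ m_0. -/

import Mathlib

open CategoryTheory

/-- The `n`-th Tor group of two `A`-modules, as an object of `ModuleCat A`. -/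
noncomputable abbrev torGroup (A : Type) [CommRing A] (M N : Type) [AddCommGroup M]
    [Module A M] [AddCommGroup N] [Module A N] (n : ℕ) : ModuleCat A :=
  ((Tor (ModuleCat A) n).obj (ModuleCat.of A M)).obj (ModuleCat.of A N)
/-! ### Part 1: graded chain conditions -/

section Chains
variable {S : Type} [CommRing S]

/-- Families of submodules between boundaries and cycles, stable under the operators. -/
def CIGood {X : ℕ → Type} [∀ n, AddCommGroup (X n)] [∀ n, Module S (X n)] (c : ℕ)
    (d : ∀ n, X (n+1) →ₗ[S] X n) (t : ℕ → ∀ n, X (n+2) →ₗ[S] X n)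
    (U : ∀ n, Submodule S (X (n+1))) : Prop :=
  (∀ n, LinearMap.range (d (n+1)) ≤ U n) ∧ (∀ n, U n ≤ LinearMap.ker (d n)) ∧
    ∀ i < c, ∀ n, ∀ u ∈ U (n+2), t i (n+1) u ∈ U n

/-- The descending chain condition for good families. -/
def CIArt {X : ℕ → Type} [∀ n, AddCommGroup (X n)] [∀ n, Module S (X n)] (c : ℕ)
    (d : ∀ n, X (n+1) →ₗ[S] X n) (t : ℕ → ∀ n, X (n+2) →ₗ[S] X n) : Prop :=
  ∀ U : ℕ → ∀ n, Submodule S (X (n+1)), (∀ k, CIGood c d t (U k)) → Antitone U →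
    ∃ K, ∀ k ≥ K, U k = U K

variable {X : ℕ → Type} [∀ n, AddCommGroup (X n)] [∀ n, Module S (X n)]

/-- Boundaries plus the image of the operator. -/
def CIPhi (d : ∀ n, X (n+1) →ₗ[S] X n) (τ : ∀ n, X (n+2) →ₗ[S] X n)
    (U : ∀ n, Submodule S (X (n+1))) : ∀ n, Submodule S (X (n+1)) :=
  fun n => LinearMap.range (d (n+1)) ⊔ (U (n+2)).map (τ (n+1))

theorem CIPhi_mono (d : ∀ n, X (n+1) →ₗ[S] X n) (τ : ∀ n, X (n+2) →ₗ[S] X n) :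
    Monotone (CIPhi d τ) := fun _ _ h n => sup_le_sup_left (Submodule.map_mono (h (n+2))) _

theorem CIArt.diag {c : ℕ} {d : ∀ n, X (n+1) →ₗ[S] X n} {t : ℕ → ∀ n, X (n+2) →ₗ[S] X n}
    (h : CIArt c d t) (V : ℕ → ℕ → ∀ n, Submodule S (X (n+1)))
    (hV : ∀ k j, CIGood c d t (V k j)) (h1 : ∀ j, Antitone fun k => V k j)
    (h2 : ∀ k, Antitone (V k)) : ∃ K, ∀ k ≥ K, ∀ j, V k j = V K j := by
  obtain ⟨K0, hK0⟩ := h (fun k => V k k) (fun k => hV k k)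
    (fun a b hab => (h1 b hab).trans (h2 a hab))
  have hs : ∀ j, ∃ K, ∀ k ≥ K, V k j = V K j := fun j => h (fun k => V k j) (fun k => hV k j) (h1 j)
  choose Kj hKj using hs
  have key : ∀ k ≥ K0, ∀ j ≥ K0, V k j = V K0 K0 := by
    intro k hk j hj
    apply le_antisymm
    · exact (h1 j hk).trans (h2 K0 hj)
    · have := hK0 (max k j) (le_trans hk (le_max_left _ _))
      rw [← this]
      exact (h1 _ (le_max_left k j)).trans (h2 k (le_max_right k j))
  refine ⟨max K0 ((Finset.range K0).sup Kj), fun k hk j => ?_⟩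
  by_cases hj : K0 ≤ j
  · rw [key k (le_trans (le_max_left _ _) hk) j hj, key _ (le_max_left _ _) j hj]
  · have : Kj j ≤ (Finset.range K0).sup Kj :=
      Finset.le_sup (f := Kj) (Finset.mem_range.mpr (by omega))
    have h3 : Kj j ≤ max K0 ((Finset.range K0).sup Kj) := this.trans (le_max_right _ _)
    rw [hKj j k (h3.trans hk), hKj j _ h3]

theorem CIArt.step {Y : ℕ → Type} [∀ n, AddCommGroup (Y n)] [∀ n, Module S (Y n)] {c : ℕ}
    (d : ∀ n, X (n+1) →ₗ[S] X n) (t : ℕ → ∀ n, X (n+2) →ₗ[S] X n)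
    (D : ∀ n, Y (n+1) →ₗ[S] Y n) (T : ℕ → ∀ n, Y (n+2) →ₗ[S] Y n)
    (π : ∀ n, Y n →ₗ[S] X (n+1))
    (hdd : ∀ n z, d n (d (n+1) z) = 0)
    (htd : ∀ i ≤ c, ∀ n z, d n (t i (n+1) z) = t i n (d (n+2) z))
    (hcomm : ∀ i < c, ∀ n, ∀ z : X (n+5), d (n+4) z = 0 →
      t i (n+1) (t c (n+3) z) - t c (n+1) (t i (n+3) z) ∈ LinearMap.range (d (n+1)))
    (hDD : ∀ n z, D n (D (n+1) z) = 0)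
    (hTD : ∀ i < c, ∀ n z, D n (T i (n+1) z) = T i n (D (n+2) z))
    (hπD : ∀ n z, π n (D n z) = d (n+1) (π (n+1) z))
    (hπT : ∀ i < c, ∀ n z, π n (T i n z) = t i (n+1) (π (n+2) z))
    (hlift : ∀ n, ∀ w : X (n+2), d (n+1) w = 0 → t c n w ∈ LinearMap.range (d n) →
      ∃ y : Y (n+1), D n y = 0 ∧ π (n+1) y = w)
    (h1 : Subsingleton (X 1)) (h2 : Subsingleton (X 2))
    (hA : CIArt c D T) : CIArt (c+1) d t := by
  have hPhiGood : ∀ U, CIGood (c+1) d t U → CIGood (c+1) d t (CIPhi d (t c) U) := by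
    rintro U ⟨hB, hZ, hT⟩
    refine ⟨fun n => le_sup_left, fun n => sup_le ?_ ?_, ?_⟩
    · rintro _ ⟨z, rfl⟩; simp [hdd]
    · rintro _ ⟨z, hz, rfl⟩
      have := hZ _ hz
      simp only [LinearMap.mem_ker] at this ⊢
      rw [htd c le_rfl, this, map_zero]
    · intro i hi n u hu
      obtain ⟨_, ⟨b, rfl⟩, _, ⟨w, hw, rfl⟩, rfl⟩ := Submodule.mem_sup.mp hu
      rw [map_add]
      refine Submodule.add_mem _ ?_ ?_
      · refine Submodule.mem_sup_left ⟨t i (n+2) b, ?_⟩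
        rw [htd i (by omega)]
      · rcases Nat.lt_succ_iff_lt_or_eq.mp hi with hi' | rfl
        · have h3 := hcomm i hi' n w (hZ _ hw)
          have h4 : t c (n+1) (t i (n+3) w) ∈ CIPhi d (t c) U n :=
            Submodule.mem_sup_right ⟨_, hT i hi _ _ hw, rfl⟩
          have := Submodule.add_mem (CIPhi d (t c) U n) (Submodule.mem_sup_left h3) h4
          rwa [sub_add_cancel] at this
        · exact Submodule.mem_sup_right ⟨_, hT i hi _ _ hw, rfl⟩
  have hPhiLe : ∀ U, CIGood (c+1) d t U → CIPhi d (t c) U ≤ U := by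
    rintro U ⟨hB, hZ, hT⟩ n
    refine sup_le (hB n) ?_
    rintro _ ⟨z, hz, rfl⟩
    exact hT c (by omega) n z hz
  intro U hU hanti
  let W : ℕ → ℕ → ∀ n, Submodule S (X (n+1)) := fun k j => (CIPhi d (t c))^[j] (U k)
  have hWs : ∀ k j, W k (j+1) = CIPhi d (t c) (W k j) := fun k j =>
    Function.iterate_succ_apply' _ _ _
  have hWG : ∀ k j, CIGood (c+1) d t (W k j) := by
    intro k j
    induction j with
    | zero => exact hU k
    | succ j ih => rw [hWs]; exact hPhiGood _ ih
  have hW1 : ∀ j, Antitone fun k => W k j := fun j a b hab =>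
    ((CIPhi_mono d (t c)).iterate j) (hanti hab)
  have hW2 : ∀ k, Antitone (W k) := fun k => antitone_nat_of_succ_le fun j => by
    rw [hWs]; exact hPhiLe _ (hWG k j)
  let V : ℕ → ℕ → ∀ n, Submodule S (Y (n+1)) := fun k j n =>
    LinearMap.ker (D n) ⊓ (W k j (n+1)).comap (π (n+1))
  have hVG : ∀ k j, CIGood c D T (V k j) := by
    intro k j
    refine ⟨?_, fun n => inf_le_left, ?_⟩
    · rintro n _ ⟨z, rfl⟩
      refine ⟨hDD n z, ?_⟩
      change π (n+1) (D (n+1) z) ∈ W k j (n+1)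
      rw [hπD]
      exact (hWG k j).1 (n+1) ⟨_, rfl⟩
    · rintro i hi n u ⟨hu1, hu2⟩
      refine ⟨?_, ?_⟩
      · change D n (T i (n+1) u) = 0
        have hu1' : D (n+2) u = 0 := hu1
        rw [hTD i hi, hu1', map_zero]
      · change π (n+1) (T i (n+1) u) ∈ W k j (n+1)
        rw [hπT i hi]
        exact (hWG k j).2.2 i (by omega) (n+1) _ hu2
  obtain ⟨K, hK⟩ := hA.diag V hVG
    (fun j a b hab n => inf_le_inf_left _ (Submodule.comap_mono (hW1 j hab (n+1))))
    (fun k a b hab n => inf_le_inf_left _ (Submodule.comap_mono (hW2 k hab (n+1))))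
  refine ⟨K, fun k hk => ?_⟩
  suffices H : ∀ n j, W K j n ≤ W k j n from
    le_antisymm (hanti hk) (fun n => H n 0)
  intro n
  induction n using Nat.strong_induction_on with
  | _ n ih =>
    match n, ih with
    | 0, _ => intro j w _; rw [Subsingleton.elim w 0]; exact Submodule.zero_mem _
    | 1, _ => intro j w _; rw [Subsingleton.elim w 0]; exact Submodule.zero_mem _
    | n+2, ih =>
      intro j w hw
      have h3 : t c (n+1) w ∈ W K (j+1) n := by
        rw [hWs]; exact Submodule.mem_sup_right ⟨w, hw, rfl⟩
      have h4 := ih n (by omega) (j+1) h3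
      rw [hWs] at h4
      obtain ⟨b, hb, _, ⟨w', hw', rfl⟩, hbw⟩ := Submodule.mem_sup.mp h4
      have h5 : w - w' ∈ W K j (n+2) := Submodule.sub_mem _ hw (hW1 j hk (n+2) hw')
      have h6 : t c (n+1) (w - w') ∈ LinearMap.range (d (n+1)) := by
        rw [map_sub, ← hbw]; simpa using hb
      obtain ⟨y, hy1, hy2⟩ := hlift (n+1) (w - w') ((hWG K j).2.1 _ h5) h6
      have h7 : y ∈ V K j (n+1) := ⟨hy1, by
        change π (n+2) y ∈ W K j (n+2); rw [hy2]; exact h5⟩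
      rw [← hK k hk j] at h7
      have h8 : π (n+2) y ∈ W k j (n+2) := h7.2
      rw [hy2] at h8
      simpa using Submodule.add_mem _ h8 hw'

/-- The socle argument: vanishing propagates in steps of two in high degrees. -/
theorem CIArt.propagate {c : ℕ}
    (d : ∀ n, X (n+1) →ₗ[S] X n) (t : ℕ → ∀ n, X (n+2) →ₗ[S] X n)
    (hdd : ∀ n z, d n (d (n+1) z) = 0)
    (htd : ∀ i < c, ∀ n z, d n (t i (n+1) z) = t i n (d (n+2) z))
    (hA : CIArt c d t) : ∃ K, ∀ n ≥ K,
      LinearMap.ker (d n) ≤ LinearMap.range (d (n+1)) →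
      LinearMap.ker (d (n+2)) ≤ LinearMap.range (d (n+3)) := by
  classical
  let Z : ∀ n, Submodule S (X (n+1)) := fun n => LinearMap.ker (d n)
  let B : ∀ n, Submodule S (X (n+1)) := fun n => LinearMap.range (d (n+1))
  have hBZ : ∀ n, B n ≤ Z n := by rintro n _ ⟨z, rfl⟩; exact hdd n z
  let So : ∀ n, Submodule S (X (n+1)) := fun n => match n with
    | 0 => Z 0
    | 1 => Z 1
    | n+2 => Z (n+2) ⊓ ⨅ i : Fin c, (B n).comap (t i (n+1))
  have hSoZ : ∀ n, So n ≤ Z n := by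
    intro n
    match n with
    | 0 => exact le_rfl
    | 1 => exact le_rfl
    | n+2 => exact inf_le_left
  have hBSo : ∀ n, B n ≤ So n := by
    intro n
    match n with
    | 0 => exact hBZ 0
    | 1 => exact hBZ 1
    | n+2 =>
      refine le_inf (hBZ _) (le_iInf fun i => ?_)
      rintro _ ⟨z, rfl⟩
      exact ⟨t i (n+2) z, by rw [htd i i.2]⟩
  have hSoT : ∀ n, ∀ i < c, ∀ u ∈ So (n+2), t i (n+1) u ∈ B n := by
    intro n i hi u hu
    have := (Submodule.mem_iInf _).mp hu.2 ⟨i, hi⟩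
    exact this
  have hTB : ∀ n, ∀ i < c, ∀ u ∈ B (n+2), t i (n+1) u ∈ B n := fun n i hi u hu =>
    hSoT n i hi u (hBSo _ hu)
  obtain ⟨K, hK⟩ := hA (fun k n => if k ≤ n then So n else B n) (by
    intro k
    refine ⟨fun n => ?_, fun n => ?_, fun i hi n u hu => ?_⟩
    · dsimp only
      split_ifs
      · exact hBSo n
      · exact le_rfl
    · dsimp only
      split_ifs
      · exact hSoZ n
      · exact hBZ n
    · have h1 : u ∈ So (n+2) := by
        dsimp only at hu
        split_ifs at hu
        · exact hu
        · exact hBSo _ hu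
      have h2 := hSoT n i hi u h1
      dsimp only
      split_ifs
      · exact hBSo n h2
      · exact h2) (by
    intro a b hab n
    dsimp only
    split_ifs with h1 h2 h2
    · exact le_rfl
    · omega
    · exact hBSo n
    · exact le_rfl)
  refine ⟨K, fun n hn hZB z hz => ?_⟩
  have h1 : z ∈ So (n+2) := by
    refine ⟨hz, (Submodule.mem_iInf _).mpr fun i => hZB ?_⟩
    have hz' : d (n+2) z = 0 := hz
    change d n (t i (n+1) z) = 0
    rw [htd i i.2, hz', map_zero]
  have h2 := congrFun (hK (n+3) (by omega)) (n+2)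
  simp only [show ¬ (n+3 ≤ n+2) by omega, if_false, show K ≤ n+2 by omega, if_true] at h2
  rw [← h2] at h1
  exact h1

end Chains

/-! ### Part 2: the change of rings step -/

section Step
variable {S : Type} [CommRing S]

/-- The submodule `(x 0, …, x (c-1)) P`. -/
def CISub (x : ℕ → S) (c : ℕ) (P : Type) [AddCommGroup P] [Module S P] : Submodule S P :=
  LinearMap.range (∑ i ∈ Finset.range c, x i • (LinearMap.proj i : (ℕ → P) →ₗ[S] P))

section
variable {P Q : Type} [AddCommGroup P] [Module S P] [AddCommGroup Q] [Module S Q]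
  {x : ℕ → S} {c : ℕ}

theorem mem_CISub {z : P} :
    z ∈ CISub x c P ↔ ∃ a : ℕ → P, ∑ i ∈ Finset.range c, x i • a i = z := by
  simp [CISub, LinearMap.mem_range]

theorem CISub_map (f : P →ₗ[S] Q) {z : P} (hz : z ∈ CISub x c P) : f z ∈ CISub x c Q := by
  obtain ⟨a, rfl⟩ := mem_CISub.mp hz
  exact mem_CISub.mpr ⟨fun i => f (a i), by simp⟩

theorem mem_CISub_succ {z : P} :
    z ∈ CISub x (c+1) P ↔ ∃ k : P, z - x c • k ∈ CISub x c P := by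
  constructor
  · intro hz
    obtain ⟨a, rfl⟩ := mem_CISub.mp hz
    exact ⟨a c, mem_CISub.mpr ⟨a, by rw [Finset.sum_range_succ]; abel⟩⟩
  · rintro ⟨k, hk⟩
    obtain ⟨a, ha⟩ := mem_CISub.mp hk
    refine mem_CISub.mpr ⟨Function.update a c k, ?_⟩
    have h1 : ∑ i ∈ Finset.range c, x i • Function.update a c k i = z - x c • k := by
      rw [← ha]
      refine Finset.sum_congr rfl fun i hi => ?_
      rw [Function.update_of_ne (by have := Finset.mem_range.mp hi; omega)]
    rw [Finset.sum_range_succ, Function.update_self, h1, sub_add_cancel]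

theorem CISub_le_succ : CISub x c P ≤ CISub x (c+1) P := fun z hz =>
  mem_CISub_succ.mpr ⟨0, by simpa using hz⟩

theorem mem_CISub_prod {z : P × Q} :
    z ∈ CISub x c (P × Q) ↔ z.1 ∈ CISub x c P ∧ z.2 ∈ CISub x c Q := by
  constructor
  · intro h
    exact ⟨CISub_map (LinearMap.fst S P Q) h, CISub_map (LinearMap.snd S P Q) h⟩
  · rintro ⟨h1, h2⟩
    have := Submodule.add_mem _ (CISub_map (LinearMap.inl S P Q) h1)
      (CISub_map (LinearMap.inr S P Q) h2)
    simpa using this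

theorem CISub_lift [Module.Projective S P] (φ : P →ₗ[S] Q) (h : ∀ z, φ z ∈ CISub x c Q) :
    ∃ v : ℕ → P →ₗ[S] Q, ∀ z, φ z = ∑ i ∈ Finset.range c, x i • v i z := by
  let g := (∑ i ∈ Finset.range c, x i • (LinearMap.proj i : (ℕ → Q) →ₗ[S] Q))
  obtain ⟨ψ, hψ⟩ := Module.projective_lifting_property g.rangeRestrict
    (φ.codRestrict (LinearMap.range g) h) g.surjective_rangeRestrict
  refine ⟨fun i => LinearMap.proj i ∘ₗ ψ, fun z => ?_⟩
  have := congrArg Subtype.val (LinearMap.congr_fun hψ z)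
  change g (ψ z) = φ z at this
  rw [← this]
  simp [g]

theorem CISub_lTensor [Module.Projective S P] {M : Type} [AddCommGroup M] [Module S M]
    (hM : ∀ i < c, ∀ m : M, x i • m = 0) (φ : P →ₗ[S] Q) (h : ∀ z, φ z ∈ CISub x c Q) :
    φ.lTensor M = 0 := by
  obtain ⟨v, hv⟩ := CISub_lift φ h
  ext m z
  simp only [TensorProduct.AlgebraTensorModule.curry_apply, TensorProduct.curry_apply,
    LinearMap.coe_restrictScalars, LinearMap.lTensor_tmul, LinearMap.zero_apply, hv,
    TensorProduct.tmul_sum]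
  refine Finset.sum_eq_zero fun i hi => ?_
  rw [← TensorProduct.smul_tmul, hM i (Finset.mem_range.mp hi), TensorProduct.zero_tmul]

/-- `x 0, …, x (c-1)` is weakly regular on `P`. -/
def CIReg (x : ℕ → S) (c : ℕ) (P : Type) [AddCommGroup P] [Module S P] : Prop :=
  ∀ i < c, ∀ z : P, x i • z ∈ CISub x i P → z ∈ CISub x i P

theorem CIReg.of_free [Module.Free S P] (h : CIReg x c S) : CIReg x c P := by
  intro i hi z hz
  let b := Module.Free.chooseBasis S P
  have key : ∀ j, b.coord j z ∈ CISub x i S := by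
    intro j
    refine h i hi _ ?_
    have := CISub_map (b.coord j) hz
    rwa [map_smul] at this
  rw [← b.linearCombination_repr z, Finsupp.linearCombination_apply]
  refine Submodule.sum_mem _ fun j _ => ?_
  exact CISub_map (LinearMap.toSpanSingleton S P (b j)) (key j)

theorem CIReg.syzygy : ∀ {c : ℕ}, CIReg x c P → ∀ a : ℕ → P,
    ∑ i ∈ Finset.range c, x i • a i = 0 → ∀ i < c, a i ∈ CISub x c P := by
  intro c
  induction c with
  | zero => intro _ _ _ i hi; omega
  | succ c ih =>
    intro h a ha i hi
    rw [Finset.sum_range_succ] at ha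
    have h1 : a c ∈ CISub x c P := by
      refine h c (by omega) _ (mem_CISub.mpr ⟨fun i => - a i, ?_⟩)
      simp only [smul_neg, Finset.sum_neg_distrib]
      exact neg_eq_of_add_eq_zero_right ha
    obtain ⟨b, hb⟩ := mem_CISub.mp h1
    rcases Nat.lt_succ_iff_lt_or_eq.mp hi with hi' | rfl
    · have h2 := ih (fun j hj => h j (by omega)) (fun j => a j + x c • b j) (by
        simp only [smul_add, Finset.sum_add_distrib]
        rw [← hb, Finset.smul_sum] at ha
        rw [← ha]
        congr 1
        exact Finset.sum_congr rfl fun j _ => smul_comm _ _ _) i hi'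
      refine mem_CISub_succ.mpr ⟨- b i, ?_⟩
      simpa using h2
    · exact CISub_le_succ h1

theorem CIReg.syzygy_last {c : ℕ} (h : CIReg x (c+1) P) (a : ℕ → P)
    (ha : ∑ i ∈ Finset.range (c+1), x i • a i = 0) : a c ∈ CISub x c P := by
  rw [Finset.sum_range_succ] at ha
  refine h c (by omega) _ (mem_CISub.mpr ⟨fun i => - a i, ?_⟩)
  simp only [smul_neg, Finset.sum_neg_distrib]
  exact neg_eq_of_add_eq_zero_right ha

end

theorem CI_comm_sum {x : ℕ → S} {c : ℕ} {F : ℕ → Type} [∀ n, AddCommGroup (F n)]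
    [∀ n, Module S (F n)] (d : ∀ n, F (n+1) →ₗ[S] F n) (t : ℕ → ∀ n, F (n+2) →ₗ[S] F n)
    (hdd : ∀ n z, d n (d (n+1) z) = ∑ i ∈ Finset.range c, x i • t i n z) (n : ℕ) (z : F (n+3)) :
    ∑ i ∈ Finset.range c, x i • (d n (t i (n+1) z) - t i n (d (n+2) z)) = 0 := by
  have h1 := congrArg (d n) (hdd (n+1) z)
  have h2 := hdd n (d (n+2) z)
  rw [map_sum] at h1
  simp only [map_smul] at h1
  simp only [smul_sub, Finset.sum_sub_distrib]
  rw [← h1, ← h2, sub_self]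

/-- The data of a lifted resolution. -/
structure CIData (J : Set S) (x : ℕ → S) (c : ℕ) (F : ℕ → Type) [∀ n, AddCommGroup (F n)]
    [∀ n, Module S (F n)] (d : ∀ n, F (n+1) →ₗ[S] F n)
    (t : ℕ → ∀ n, F (n+2) →ₗ[S] F n) : Prop where
  free : ∀ n, Module.Free S (F n)
  fin : ∀ n, Module.Finite S (F n)
  dd : ∀ n z, d n (d (n+1) z) = ∑ i ∈ Finset.range c, x i • t i n z
  low : ∀ n < 3 + c, Subsingleton (F n)
  ex : ∀ n ≥ 3 + c, ∀ f, d n f ∈ CISub x c (F n) → ∃ g, f - d (n+1) g ∈ CISub x c (F (n+1))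
  ann : ∀ a ∈ J, ∀ f, ∃ g, a • f - d (3+c) g ∈ CISub x c (F (3+c))

variable {J : Set S} {x : ℕ → S} {c : ℕ} {F : ℕ → Type} [∀ n, AddCommGroup (F n)]
    [∀ n, Module S (F n)] {d : ∀ n, F (n+1) →ₗ[S] F n} {t : ℕ → ∀ n, F (n+2) →ₗ[S] F n}

theorem CIData.comm (h : CIData J x c F d t) (hx : CIReg x c S) (i : ℕ) (hi : i < c) (n : ℕ)
    (z : F (n+3)) : d n (t i (n+1) z) - t i n (d (n+2) z) ∈ CISub x c (F n) := by
  have := h.free n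
  exact CIReg.syzygy (CIReg.of_free hx) (fun i => d n (t i (n+1) z) - t i n (d (n+2) z))
    (CI_comm_sum d t h.dd n z) i hi

/-- The differential on the lifted cone. -/
def CID (a : S) (d : ∀ n, F (n+1) →ₗ[S] F n) (τ : ∀ n, F (n+2) →ₗ[S] F n) (n : ℕ) :
    (F (n+2) × F (n+1)) →ₗ[S] (F (n+1) × F n) :=
  LinearMap.prod ((d (n+1)).comp (LinearMap.fst S _ _) + a • LinearMap.snd S _ _)
    (-((τ n).comp (LinearMap.fst S _ _)) - (d n).comp (LinearMap.snd S _ _))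

/-- The operators on the lifted cone. -/
def CIT (t : ∀ n, F (n+2) →ₗ[S] F n) (v : ∀ n, F (n+3) →ₗ[S] F n) (n : ℕ) :
    (F (n+3) × F (n+2)) →ₗ[S] (F (n+1) × F n) :=
  LinearMap.prod ((t (n+1)).comp (LinearMap.fst S _ _))
    ((v n).comp (LinearMap.fst S _ _) + (t n).comp (LinearMap.snd S _ _))

@[simp] theorem CID_apply (a : S) (d : ∀ n, F (n+1) →ₗ[S] F n) (τ : ∀ n, F (n+2) →ₗ[S] F n)
    (n : ℕ) (z : F (n+2) × F (n+1)) :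
    CID a d τ n z = (d (n+1) z.1 + a • z.2, - τ n z.1 - d n z.2) := rfl

@[simp] theorem CIT_apply (t : ∀ n, F (n+2) →ₗ[S] F n) (v : ∀ n, F (n+3) →ₗ[S] F n)
    (n : ℕ) (z : F (n+3) × F (n+2)) :
    CIT t v n z = (t (n+1) z.1, v n z.1 + t n z.2) := rfl

theorem CIData.cone (h : CIData J x (c+1) F d t) (hx : CIReg x (c+1) S) :
    ∃ v : ℕ → ∀ n, F (n+3) →ₗ[S] F n,
      CIData J x c (fun n => F (n+1) × F n) (CID (x c) d (t c)) (fun i => CIT (t i) (v i)) := by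
  have hfree := h.free
  have hfin := h.fin
  have h1 : ∀ n, ∀ z : F (n+3), (d n ∘ₗ t c (n+1) - t c n ∘ₗ d (n+2)) z ∈ CISub x c (F n) := by
    intro n z
    exact CIReg.syzygy_last (CIReg.of_free hx) (fun i => d n (t i (n+1) z) - t i n (d (n+2) z))
      (CI_comm_sum d t h.dd n z)
  choose v hv using fun n => CISub_lift _ (h1 n)
  have hDD : ∀ n (z : F (n+3) × F (n+2)), CID (x c) d (t c) n (CID (x c) d (t c) (n+1) z) =
      ∑ i ∈ Finset.range c, x i • CIT (t i) (fun n => v n i) n z := by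
    rintro n ⟨f, g⟩
    refine Prod.ext ?_ ?_
    · have := h.dd (n+1) f
      rw [Finset.sum_range_succ] at this
      simp only [CID_apply, CIT_apply, map_add, map_smul, Prod.fst_sum, Prod.smul_fst]
      rw [this]
      simp only [smul_sub, smul_neg]
      abel
    · have h2 := h.dd n g
      rw [Finset.sum_range_succ] at h2
      have h3 := hv n f
      simp only [LinearMap.sub_apply, LinearMap.comp_apply] at h3
      simp only [CID_apply, CIT_apply, map_add, map_smul, Prod.snd_sum, Prod.smul_snd, smul_add,
        Finset.sum_add_distrib, map_sub, map_neg]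
      rw [← h3, h2]
      abel
  refine ⟨fun i n => v n i, fun n => inferInstance, fun n => inferInstance, hDD, ?_, ?_, ?_⟩
  · intro n hn
    have := h.low n (by omega)
    have := h.low (n+1) (by omega)
    infer_instance
  · rintro n hn ⟨f, g⟩ hfg
    have hfg1 := (mem_CISub_prod.mp hfg).1
    simp only [CID_apply] at hfg1
    obtain ⟨r, hr⟩ := h.ex (n+1) (by omega) f
      (mem_CISub_succ.mpr ⟨- g, by simpa using hfg1⟩)
    obtain ⟨k, hk⟩ := mem_CISub_succ.mp hr
    refine ⟨(r, k), ?_⟩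
    have h5 : CID (x c) d (t c) n ((f, g) - CID (x c) d (t c) (n+1) (r, k)) ∈
        CISub x c (F (n+1) × F n) := by
      rw [map_sub, hDD]
      exact Submodule.sub_mem _ hfg (mem_CISub.mpr ⟨_, rfl⟩)
    have h6 := (mem_CISub_prod.mp h5).1
    rw [CID_apply] at h6
    set e := ((f, g) - CID (x c) d (t c) (n+1) (r, k)).1 with he
    set g' := ((f, g) - CID (x c) d (t c) (n+1) (r, k)).2 with hg'
    have he' : e ∈ CISub x c (F (n+2)) := by
      have : e = f - d (n+2) r - x c • k := by
        simp only [he, CID_apply, Prod.fst_sub]; abel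
      rw [this]; exact hk
    refine mem_CISub_prod.mpr ⟨he', ?_⟩
    have h7 : x c • g' ∈ CISub x c (F (n+1)) := by
      have := Submodule.sub_mem _ h6 (CISub_map (d (n+1)) he')
      simpa using this
    exact (CIReg.of_free hx) c (by omega) g' h7
  · rintro a ha ⟨f1, f2⟩
    obtain ⟨g, hg⟩ := h.ann a ha f1
    obtain ⟨k, hk⟩ := mem_CISub_succ.mp hg
    refine ⟨(g, k), mem_CISub_prod.mpr ⟨?_, ?_⟩⟩
    · have : (a • (f1, f2) - CID (x c) d (t c) (3+c) (g, k)).1 =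
          a • f1 - d (3+c+1) g - x c • k := by
        simp only [CID_apply, Prod.fst_sub, Prod.smul_fst]; abel
      rw [this]; exact hk
    · have := h.low (3+c) (by omega)
      rw [Subsingleton.elim (Prod.snd _) (0 : F (3+c))]
      exact Submodule.zero_mem _

variable {M : Type} [AddCommGroup M] [Module S M]

theorem CIData.tensor_dd (h : CIData J x c F d t) (hM : ∀ i < c, ∀ m : M, x i • m = 0)
    (n : ℕ) (z) : (d n).lTensor M ((d (n+1)).lTensor M z) = 0 := by
  have := h.free
  have h1 := CISub_lTensor hM (d n ∘ₗ d (n+1)) (fun z => mem_CISub.mpr ⟨_, (h.dd n z).symm⟩)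
  rw [← LinearMap.comp_apply, ← LinearMap.lTensor_comp, h1, LinearMap.zero_apply]

theorem CIData.tensor_comm (h : CIData J x c F d t) (hx : CIReg x c S)
    (hM : ∀ i < c, ∀ m : M, x i • m = 0) (i : ℕ) (hi : i < c)
    (n : ℕ) (z) : (d n).lTensor M ((t i (n+1)).lTensor M z) =
      (t i n).lTensor M ((d (n+2)).lTensor M z) := by
  have := h.free
  have h1 := CISub_lTensor hM (d n ∘ₗ t i (n+1) - t i n ∘ₗ d (n+2)) (h.comm hx i hi n)
  rw [LinearMap.lTensor_sub, sub_eq_zero, LinearMap.lTensor_comp, LinearMap.lTensor_comp] at h1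
  exact LinearMap.congr_fun h1 z

theorem CIData.art (hbase : ∀ (F : ℕ → Type) [∀ n, AddCommGroup (F n)]
    [∀ n, Module S (F n)] (d : ∀ n, F (n+1) →ₗ[S] F n) (t : ℕ → ∀ n, F (n+2) →ₗ[S] F n),
    CIData J x 0 F d t → CIArt (X := fun n => TensorProduct S M (F n)) 0
      (fun n => (d n).lTensor M) (fun i n => (t i n).lTensor M)) :
    ∀ (c : ℕ) (F : ℕ → Type) [∀ n, AddCommGroup (F n)]
    [∀ n, Module S (F n)] (d : ∀ n, F (n+1) →ₗ[S] F n) (t : ℕ → ∀ n, F (n+2) →ₗ[S] F n),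
    CIReg x c S → (∀ i < c, ∀ m : M, x i • m = 0) → CIData J x c F d t →
      CIArt (X := fun n => TensorProduct S M (F n)) c
      (fun n => (d n).lTensor M) (fun i n => (t i n).lTensor M) := by
  intro c
  induction c with
  | zero => intro F _ _ d t _ _ h; exact hbase F d t h
  | succ c ih =>
    intro F _ _ d t hx hM h
    have hfree := h.free
    have hx' : CIReg x c S := fun i hi => hx i (by omega)
    have hM' : ∀ i < c, ∀ m : M, x i • m = 0 := fun i hi => hM i (by omega)
    obtain ⟨v, hv⟩ := h.cone hx
    have hxc : ∀ (P : Type) [AddCommGroup P] [Module S P] (z : TensorProduct S M P),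
        x c • z = 0 := by
      intro P _ _ z
      induction z with
      | zero => simp
      | tmul m p => rw [TensorProduct.smul_tmul', hM c (by omega), TensorProduct.zero_tmul]
      | add a b ha hb => rw [smul_add, ha, hb, add_zero]
    refine CIArt.step (X := fun n => TensorProduct S M (F n))
      (Y := fun n => TensorProduct S M (F (n+1) × F n)) (c := c) _ _ _ _
      (fun n => (LinearMap.fst S (F (n+1)) (F n)).lTensor M)
      (h.tensor_dd hM) (fun i hi => h.tensor_comm hx hM i (by omega)) ?_
      (hv.tensor_dd hM') (fun i hi => hv.tensor_comm hx' hM' i hi) ?_ ?_ ?_ ?_ ?_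
      (ih _ _ _ hx' hM' hv)
    · intro i hi n z hz
      have h1 : ∀ f : F (n+5), (t i (n+1) ∘ₗ t c (n+3) - t c (n+1) ∘ₗ t i (n+3)
          - d (n+1) ∘ₗ v i (n+2) - v i (n+1) ∘ₗ d (n+4)) f ∈ CISub x c (F (n+1)) := by
        intro f
        have h2 := (mem_CISub_prod.mp (hv.comm hx' i hi (n+1) (f, 0))).2
        simp only [CID_apply, CIT_apply, Prod.snd_sub, map_zero, smul_zero, add_zero, sub_zero,
          map_neg] at h2
        convert h2 using 1
        simp only [LinearMap.sub_apply, LinearMap.comp_apply]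
        abel
      have h3 := LinearMap.congr_fun (CISub_lTensor hM' _ h1) z
      simp only [LinearMap.lTensor_sub, LinearMap.sub_apply, LinearMap.lTensor_comp,
        LinearMap.comp_apply, LinearMap.zero_apply] at h3
      rw [hz, map_zero, sub_zero, sub_eq_zero] at h3
      exact ⟨_, h3.symm⟩
    · intro n z
      have h1 : LinearMap.fst S (F (n+1)) (F n) ∘ₗ CID (x c) d (t c) n =
        d (n+1) ∘ₗ LinearMap.fst S _ _ + x c • LinearMap.snd S _ _ := rfl
      have h2 := LinearMap.congr_fun (congrArg (LinearMap.lTensor M) h1) z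
      simp only [LinearMap.lTensor_add, LinearMap.lTensor_smul, LinearMap.lTensor_comp,
        LinearMap.add_apply, LinearMap.smul_apply, LinearMap.comp_apply, hxc, add_zero] at h2
      exact h2
    · intro i hi n z
      have h1 : LinearMap.fst S (F (n+1)) (F n) ∘ₗ CIT (t i) (v i) n =
        t i (n+1) ∘ₗ LinearMap.fst S _ _ := rfl
      have h2 := LinearMap.congr_fun (congrArg (LinearMap.lTensor M) h1) z
      simp only [LinearMap.lTensor_comp, LinearMap.comp_apply] at h2
      exact h2
    · rintro n w hw ⟨g, hg⟩
      refine ⟨(LinearMap.inl S (F (n+2)) (F (n+1))).lTensor M w -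
        (LinearMap.inr S (F (n+2)) (F (n+1))).lTensor M g, ?_, ?_⟩
      · have h1 : CID (x c) d (t c) n ∘ₗ LinearMap.inl S (F (n+2)) (F (n+1)) =
            LinearMap.inl S _ _ ∘ₗ d (n+1) - LinearMap.inr S _ _ ∘ₗ t c n := by
          ext f <;> simp
        have h2 : CID (x c) d (t c) n ∘ₗ LinearMap.inr S (F (n+2)) (F (n+1)) =
            x c • LinearMap.inl S _ _ - LinearMap.inr S _ _ ∘ₗ d n := by
          ext f <;> simp
        have h3 := LinearMap.congr_fun (congrArg (LinearMap.lTensor M) h1) w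
        have h4 := LinearMap.congr_fun (congrArg (LinearMap.lTensor M) h2) g
        simp only [LinearMap.lTensor_sub, LinearMap.lTensor_smul, LinearMap.lTensor_comp,
          LinearMap.sub_apply, LinearMap.smul_apply, LinearMap.comp_apply, hxc] at h3 h4
        rw [map_sub, h3, h4, hw, hg]
        simp
      · skip
        have h1 : LinearMap.fst S (F (n+2)) (F (n+1)) ∘ₗ LinearMap.inl S _ _ = LinearMap.id := rfl
        have h2 : LinearMap.fst S (F (n+2)) (F (n+1)) ∘ₗ LinearMap.inr S _ _ = 0 := rfl
        rw [map_sub, ← LinearMap.comp_apply, ← LinearMap.comp_apply, ← LinearMap.lTensor_comp,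
          ← LinearMap.lTensor_comp, h1, h2]
        simp
    · have := h.low 1 (by omega)
      infer_instance
    · have := h.low 2 (by omega)
      infer_instance

end Step

/-! ### Part 3: the base case -/

section Base
variable {S : Type} [CommRing S]

theorem CI_lift_range {P Q R : Type} [AddCommGroup P] [Module S P] [AddCommGroup Q] [Module S Q]
    [AddCommGroup R] [Module S R] [Module.Projective S P] (φ : P →ₗ[S] Q) (f : R →ₗ[S] Q)
    (h : ∀ z, ∃ w, f w = φ z) : ∃ ψ : P →ₗ[S] R, ∀ z, f (ψ z) = φ z := by
  obtain ⟨ψ, hψ⟩ := Module.projective_lifting_property f.rangeRestrict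
    (φ.codRestrict (LinearMap.range f) (fun z => LinearMap.mem_range.mpr (h z)))
    f.surjective_rangeRestrict
  exact ⟨ψ, fun z => congrArg Subtype.val (LinearMap.congr_fun hψ z)⟩

theorem CI_artinian [IsNoetherianRing S] [IsLocalRing S] (k : ℕ) (H : Type) [AddCommGroup H]
    [Module S H] [Module.Finite S H]
    (h : ∀ a ∈ IsLocalRing.maximalIdeal S ^ k, ∀ z : H, a • z = 0) : IsArtinian S H := by
  let I := IsLocalRing.maximalIdeal S ^ (k+1)
  have hI : I ≠ ⊤ := by
    intro h1
    have : I ≤ IsLocalRing.maximalIdeal S := Ideal.pow_le_self (by omega)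
    rw [h1] at this
    exact (IsLocalRing.maximalIdeal.isMaximal S).ne_top (top_le_iff.mp this)
  have : Nontrivial (S ⧸ I) := Ideal.Quotient.nontrivial_iff.mpr hI
  have := IsLocalRing.of_surjective' (Ideal.Quotient.mk I) Ideal.Quotient.mk_surjective
  have hart : IsArtinianRing (S ⧸ I) := by
    rw [isArtinianRing_iff_isNilpotent_maximalIdeal]
    refine ⟨k+1, ?_⟩
    have hm : IsLocalRing.maximalIdeal (S ⧸ I) =
        (IsLocalRing.maximalIdeal S).map (Ideal.Quotient.mk I) :=
      (IsLocalRing.map_maximalIdeal_of_surjective _ Ideal.Quotient.mk_surjective).symm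
    rw [hm, ← Ideal.map_pow, Ideal.zero_eq_bot, Ideal.map_eq_bot_iff_le_ker, Ideal.mk_ker]
  have htor : Module.IsTorsionBySet S H I := by
    rintro z ⟨a, ha⟩
    exact h a (Ideal.pow_le_pow_right (by omega) ha) z
  let _ := htor.module
  have : IsScalarTower S (S ⧸ I) H := htor.isScalarTower
  have : Module.Finite (S ⧸ I) H := Module.Finite.of_restrictScalars_finite S (S ⧸ I) H
  have h2 : IsArtinian (S ⧸ I) H := inferInstance
  exact (isArtinian_of_surjective_algebraMap (S := S) (R := S ⧸ I) (M := H)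
    Ideal.Quotient.mk_surjective)

variable {J : Set S} {x : ℕ → S} {F : ℕ → Type} [∀ n, AddCommGroup (F n)]
    [∀ n, Module S (F n)] {d : ∀ n, F (n+1) →ₗ[S] F n} {t : ℕ → ∀ n, F (n+2) →ₗ[S] F n}

theorem CISub_zero {P : Type} [AddCommGroup P] [Module S P] {z : P} :
    z ∈ CISub x 0 P ↔ z = 0 := by
  rw [mem_CISub]; simp [eq_comm]

theorem CIData.dd0 (h : CIData J x 0 F d t) (n : ℕ) (z) : d n (d (n+1) z) = 0 := by
  simpa using h.dd n z

theorem CIData.ex0 (h : CIData J x 0 F d t) (n : ℕ) (hn : 3 ≤ n) (f) (hf : d n f = 0) :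
    ∃ g, d (n+1) g = f := by
  obtain ⟨g, hg⟩ := h.ex n hn f (CISub_zero.mpr hf)
  exact ⟨g, (sub_eq_zero.mp (CISub_zero.mp hg)).symm⟩

theorem CIData.homotopy_step (h : CIData J x 0 F d t) (a : S) (n : ℕ) (hn : 3 ≤ n)
    (k : F n →ₗ[S] F (n+1)) (hk : ∀ z, d n (k (d n z)) = a • d n z) :
    ∃ k' : F (n+1) →ₗ[S] F (n+2), ∀ z, d (n+1) (k' z) + k (d n z) = a • z := by
  have := h.free
  obtain ⟨k', hk'⟩ := CI_lift_range (a • LinearMap.id - k ∘ₗ d n) (d (n+1)) (by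
    intro z
    apply h.ex0 n hn
    simp [hk])
  refine ⟨k', fun z => ?_⟩
  rw [hk']
  simp

theorem CIData.homotopy (h : CIData J x 0 F d t) (a : S) (ha : a ∈ J) (n : ℕ) :
    ∃ (k : F n →ₗ[S] F (n+1)) (k' : F (n+1) →ₗ[S] F (n+2)),
      ∀ z, d (n+1) (k' z) + k (d n z) = a • z := by
  have := h.free
  induction n with
  | zero =>
    have := h.low 1 (by omega)
    exact ⟨0, 0, fun z => Subsingleton.elim (α := F 1) _ _⟩
  | succ n ih =>
    rcases Nat.lt_trichotomy n 1 with hn | hn | hn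
    · have := h.low (n+1+1) (by omega)
      exact ⟨0, 0, fun z => Subsingleton.elim (α := F (n+1+1)) _ _⟩
    · subst hn
      obtain ⟨k', hk'⟩ := CI_lift_range (a • LinearMap.id) (d 3) (by
        intro z
        obtain ⟨g, hg⟩ := h.ann a ha z
        exact ⟨g, (sub_eq_zero.mp (CISub_zero.mp hg)).symm⟩)
      exact ⟨0, k', fun z => by
        have := hk' z
        simp only [LinearMap.smul_apply, LinearMap.id_apply] at this
        simpa using this⟩
    · obtain ⟨k, k', hk⟩ := ih
      obtain ⟨k'', hk''⟩ := h.homotopy_step a (n+1) (by omega) k' (by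
        intro z
        have := hk (d (n+1) z)
        rw [h.dd0, map_zero, add_zero] at this
        exact this)
      exact ⟨k', k'', hk''⟩

variable {M : Type} [AddCommGroup M] [Module S M]

theorem CI_homotopy_tensor (a : S) (n : ℕ) (k : F n →ₗ[S] F (n+1)) (k' : F (n+1) →ₗ[S] F (n+2))
    (hk : ∀ z, d (n+1) (k' z) + k (d n z) = a • z) (z : TensorProduct S M (F (n+1)))
    (hz : (d n).lTensor M z = 0) : a • z ∈ LinearMap.range ((d (n+1)).lTensor M) := by
  have h1 : d (n+1) ∘ₗ k' + k ∘ₗ d n = a • LinearMap.id := LinearMap.ext hk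
  have h2 := LinearMap.congr_fun (congrArg (LinearMap.lTensor M) h1) z
  simp only [LinearMap.lTensor_add, LinearMap.lTensor_smul, LinearMap.lTensor_comp,
        LinearMap.add_apply, LinearMap.smul_apply, LinearMap.comp_apply, hz, map_zero, add_zero,
        LinearMap.lTensor_id, LinearMap.id_apply] at h2
  exact ⟨_, h2⟩

theorem CIData.fpd_aux (h : CIData J x 0 F d t) {y : ℕ → S} : ∀ {e : ℕ}, CIReg y e S →
    ∀ n ≥ 3 + e, ∀ z, d n z ∈ CISub y e (F n) → ∃ g, z - d (n+1) g ∈ CISub y e (F (n+1)) := by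
  have hfree := h.free
  intro e
  induction e with
  | zero =>
    intro _ n hn z hz
    obtain ⟨g, hg⟩ := h.ex0 n hn z (CISub_zero.mp hz)
    exact ⟨g, CISub_zero.mpr (by rw [hg, sub_self])⟩
  | succ e ih =>
    intro hy n hn z hz
    have ih := ih (fun i hi => hy i (by omega))
    obtain ⟨k, hk⟩ := mem_CISub_succ.mp hz
    obtain ⟨m, rfl⟩ : ∃ m, n = m+1 := ⟨n-1, by omega⟩
    have h1 : y e • d m k ∈ CISub y e (F m) := by
      have := CISub_map (d m) hk
      rw [map_sub, h.dd0, zero_sub, map_smul] at this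
      exact (Submodule.neg_mem_iff _).mp this
    have h2 := CIReg.of_free hy e (by omega) _ h1
    obtain ⟨g, hg⟩ := ih m (by omega) k h2
    obtain ⟨g', hg'⟩ := ih (m+1) (by omega) (z - y e • g) (by
      rw [map_sub, map_smul]
      have := Submodule.add_mem _ hk (Submodule.smul_mem _ (y e) hg)
      convert this using 1
      rw [smul_sub]; abel)
    refine ⟨g', mem_CISub_succ.mpr ⟨g, ?_⟩⟩
    convert hg' using 1
    abel

theorem CI_smul_top {y : ℕ → S} {e : ℕ} {I : Ideal S} (hy : CISub y e S = I)
    (P : Type) [AddCommGroup P] [Module S P] : (I • ⊤ : Submodule S P) = CISub y e P := by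
  apply le_antisymm
  · rw [Submodule.smul_le]
    intro a ha p _
    rw [← hy] at ha
    exact CISub_map (LinearMap.toSpanSingleton S P p) ha
  · intro z hz
    obtain ⟨a, rfl⟩ := mem_CISub.mp hz
    refine Submodule.sum_mem _ fun i hi => Submodule.smul_mem_smul ?_ trivial
    rw [← hy]
    refine mem_CISub.mpr ⟨fun j => if j = i then 1 else 0, ?_⟩
    simp only [smul_eq_mul, mul_ite, mul_one, mul_zero, Finset.sum_ite_eq']
    rw [if_pos hi]

theorem CI_one_tmul_eq_zero [IsLocalRing S] (P : Type) [AddCommGroup P] [Module S P] (z : P) :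
    (1 : IsLocalRing.ResidueField S) ⊗ₜ[S] z = 0 ↔
      z ∈ (IsLocalRing.maximalIdeal S • ⊤ : Submodule S P) := by
  rw [← Submodule.Quotient.mk_eq_zero]
  exact LinearEquiv.map_eq_zero_iff
    (TensorProduct.quotTensorEquivQuotSMul P (IsLocalRing.maximalIdeal S)).symm
    (x := Submodule.Quotient.mk z)

theorem CIData.fpd [IsNoetherianRing S] [IsLocalRing S] (h : CIData J x 0 F d t) {y : ℕ → S}
    {e : ℕ} (hy : CIReg y e S) (hym : CISub y e S = IsLocalRing.maximalIdeal S) :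
    ∃ k : F (3+e+1) →ₗ[S] F (3+e+2), ∀ z, d (3+e+1) (k (d (3+e+1) z)) = d (3+e+1) z := by
  have hfree := h.free
  have hfin := h.fin
  let K := LinearMap.range (d (3+e+1))
  have hinj : Function.Injective (K.subtype.lTensor (IsLocalRing.ResidueField S)) := by
    rw [injective_iff_map_eq_zero]
    intro w hw
    obtain ⟨w, rfl⟩ : ∃ v : K, (1 : IsLocalRing.ResidueField S) ⊗ₜ[S] v = w := by
      clear hw
      induction w with
      | zero => exact ⟨0, TensorProduct.tmul_zero _ _⟩
      | tmul a v =>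
        obtain ⟨a, rfl⟩ := IsLocalRing.residue_surjective a
        refine ⟨a • v, ?_⟩
        rw [← TensorProduct.smul_tmul, ← IsLocalRing.ResidueField.algebraMap_eq,
          Algebra.algebraMap_eq_smul_one]
      | add a b ha hb =>
        obtain ⟨a, rfl⟩ := ha
        obtain ⟨b, rfl⟩ := hb
        exact ⟨a + b, TensorProduct.tmul_add _ _ _⟩
    rw [LinearMap.lTensor_tmul, CI_one_tmul_eq_zero, CI_smul_top hym] at hw
    rw [CI_one_tmul_eq_zero, CI_smul_top hym]
    obtain ⟨w, ⟨z, rfl⟩⟩ := w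
    obtain ⟨g, hg⟩ := h.fpd_aux hy (3+e+1) (by omega) z hw
    have h1 := CISub_map ((d (3+e+1)).rangeRestrict) hg
    convert h1 using 1
    apply Subtype.ext
    simp [h.dd0]
  obtain ⟨l, hl⟩ := (IsLocalRing.split_injective_iff_lTensor_residueField_injective
    K.subtype).mpr hinj
  obtain ⟨k, hk⟩ := CI_lift_range (K.subtype ∘ₗ l) (d (3+e+1)) (fun z => (l z).2)
  refine ⟨k, fun z => ?_⟩
  rw [hk]
  exact congrArg Subtype.val (LinearMap.congr_fun hl ⟨d (3+e+1) z, z, rfl⟩)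

theorem CIData.tensor_exact [IsNoetherianRing S] [IsLocalRing S] (h : CIData J x 0 F d t)
    {y : ℕ → S} {e : ℕ} (hy : CIReg y e S) (hym : CISub y e S = IsLocalRing.maximalIdeal S)
    (n : ℕ) (hn : 3 + e + 1 ≤ n) (z : TensorProduct S M (F (n+1)))
    (hz : (d n).lTensor M z = 0) : z ∈ LinearMap.range ((d (n+1)).lTensor M) := by
  have key : ∃ k : F n →ₗ[S] F (n+1), ∀ z, d n (k (d n z)) = (1:S) • d n z := by
    clear hz z
    induction n, hn using Nat.le_induction with
    | base =>
      obtain ⟨k, hk⟩ := h.fpd hy hym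
      exact ⟨k, fun z => by rw [hk, one_smul]⟩
    | succ n hn ih =>
      obtain ⟨k, hk⟩ := ih
      obtain ⟨k', hk'⟩ := h.homotopy_step 1 n (by omega) k hk
      refine ⟨k', fun z => ?_⟩
      have := hk' (d (n+1) z)
      rw [h.dd0, map_zero, add_zero] at this
      exact this
  obtain ⟨k, hk⟩ := key
  obtain ⟨k', hk'⟩ := h.homotopy_step 1 n (by omega) k hk
  simpa using CI_homotopy_tensor 1 n k k' hk' z hz

theorem CIData.base [IsNoetherianRing S] [IsLocalRing S] [Module.Finite S M] (k : ℕ)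
    (hJ : IsLocalRing.maximalIdeal S ^ k ≤ Ideal.span J ⊔ Module.annihilator S M)
    {y : ℕ → S} {e : ℕ} (hy : CIReg y e S) (hym : CISub y e S = IsLocalRing.maximalIdeal S)
    (F : ℕ → Type) [∀ n, AddCommGroup (F n)]
    [∀ n, Module S (F n)] (d : ∀ n, F (n+1) →ₗ[S] F n) (t : ℕ → ∀ n, F (n+2) →ₗ[S] F n)
    (h : CIData J x 0 F d t) : CIArt (X := fun n => TensorProduct S M (F n)) 0
      (fun n => (d n).lTensor M) (fun i n => (t i n).lTensor M) := by
  have hfin := h.fin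
  intro U hU hanti
  have hn : ∀ n, ∃ K, ∀ k ≥ K, U k n = U K n := by
    intro n
    let B := LinearMap.range ((d (n+1)).lTensor M)
    let Z := LinearMap.ker ((d n).lTensor M)
    let H := Z.map B.mkQ
    have hH : IsArtinian S H := by
      refine CI_artinian k H ?_
      intro a ha z
      have hle : Ideal.span J ⊔ Module.annihilator S M ≤ Module.annihilator S H := by
        refine sup_le (Ideal.span_le.mpr ?_) ?_
        · intro a ha
          rw [SetLike.mem_coe, Module.mem_annihilator]
          rintro ⟨_, z, hz, rfl⟩
          apply Subtype.ext
          obtain ⟨k, k', hk⟩ := h.homotopy a ha n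
          have := CI_homotopy_tensor a n k k' hk z hz
          change a • B.mkQ z = 0
          rw [← map_smul]
          exact (Submodule.Quotient.mk_eq_zero B).mpr this
        · intro a ha
          rw [Module.mem_annihilator] at ha ⊢
          rintro ⟨_, z, hz, rfl⟩
          apply Subtype.ext
          change a • B.mkQ z = 0
          rw [← map_smul]
          have : a • z = 0 := by
            clear hz
            induction z with
            | zero => simp
            | tmul m p => rw [TensorProduct.smul_tmul', ha, TensorProduct.zero_tmul]
            | add a b ha hb => rw [smul_add, ha, hb, add_zero]
          rw [this, map_zero]
      exact Module.mem_annihilator.mp (hle (hJ ha)) z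
    let f : ℕ →o (Submodule S H)ᵒᵈ := ⟨fun k => OrderDual.toDual
      (((U k n).map B.mkQ).comap H.subtype), fun a b hab =>
        Submodule.comap_mono (Submodule.map_mono (hanti hab n))⟩
    obtain ⟨K, hK⟩ := IsArtinian.monotone_stabilizes f
    refine ⟨K, fun k hk => le_antisymm (hanti hk n) ?_⟩
    intro u hu
    have huZ : u ∈ Z := (hU K).2.1 n hu
    have h1 : ((U K n).map B.mkQ).comap H.subtype = ((U k n).map B.mkQ).comap H.subtype := hK k hk
    have h2 : (⟨B.mkQ u, u, huZ, rfl⟩ : H) ∈ ((U K n).map B.mkQ).comap H.subtype :=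
      ⟨u, hu, rfl⟩
    rw [h1] at h2
    obtain ⟨u', hu', he⟩ := h2
    have h3 : u - u' ∈ B := by
      rw [← Submodule.Quotient.mk_eq_zero, Submodule.Quotient.mk_sub, sub_eq_zero]
      exact he.symm
    have := Submodule.add_mem _ ((hU k).1 n h3) hu'
    simpa using this
  choose K hK using hn
  refine ⟨(Finset.range (3+e+1)).sup K, fun k hk => ?_⟩
  funext n
  by_cases hlt : n < 3+e+1
  · have h1 : K n ≤ (Finset.range (3+e+1)).sup K := Finset.le_sup (Finset.mem_range.mpr hlt)
    rw [hK n k (h1.trans hk), hK n _ h1]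
  · have : ∀ k, U k n = LinearMap.range ((d (n+1)).lTensor M) := fun k => le_antisymm
      (fun u hu => h.tensor_exact hy hym n (by omega) u ((hU k).2.1 n hu)) ((hU k).1 n)
    rw [this, this]

end Base

/-! ### Part 4: regular local rings -/

section Regular

theorem CI_cancel (j i : ℕ) (a : WithBot ℕ∞) (h : (j : WithBot ℕ∞) + i ≤ a + i) :
    (j : WithBot ℕ∞) ≤ a := by
  have := @ENat.WithBot.add_le_add_natCast_right_iff
  exact this.mp h

theorem CI_domain : ∀ (e : ℕ) (S : Type) [CommRing S] [IsNoetherianRing S] [IsLocalRing S],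
    (IsLocalRing.maximalIdeal S).spanFinrank ≤ e → ((e : ℕ) : WithBot ℕ∞) ≤ ringKrullDim S →
    IsDomain S := by
  intro e
  induction e with
  | zero =>
    intro S _ _ _ h _
    have h1 : IsLocalRing.maximalIdeal S = ⊥ :=
      (Submodule.spanFinrank_eq_zero_iff_eq_bot (IsNoetherian.noetherian _)).mp (by omega)
    exact (IsLocalRing.isField_iff_maximalIdeal_eq.mpr h1).isDomain
  | succ e ih =>
    intro S _ _ _ h hdim
    have hfin := minimalPrimes.finite_of_isNoetherianRing S
    have hmfg : (IsLocalRing.maximalIdeal S).FG := IsNoetherian.noetherian _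
    have hspan := ringKrullDim_le_spanFinrank_maximalIdeal S
    obtain ⟨y, hym, hy2, hyp⟩ : ∃ y ∈ IsLocalRing.maximalIdeal S,
        y ∉ IsLocalRing.maximalIdeal S ^ 2 ∧ ∀ p ∈ minimalPrimes S, y ∉ p := by
      by_contra! hcon
      classical
      have := (Ideal.subset_union_prime (s := insert (IsLocalRing.maximalIdeal S ^ 2) hfin.toFinset)
        (f := id) (I := IsLocalRing.maximalIdeal S) (IsLocalRing.maximalIdeal S ^ 2)
        (IsLocalRing.maximalIdeal S ^ 2) (by
          intro p hp hp1 _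
          have hp' : p ∈ minimalPrimes S := by simpa [hp1] using hp
          exact hp'.1.1)).mp (by
          intro y hy
          by_cases h2 : y ∈ IsLocalRing.maximalIdeal S ^ 2
          · simp only [Set.mem_iUnion]
            exact ⟨_, by simp, h2⟩
          · obtain ⟨p, hp, hyp⟩ := hcon y hy h2
            simp only [Set.mem_iUnion]
            exact ⟨p, by simp [hp], hyp⟩)
      obtain ⟨p, hp, hmp⟩ := this
      rw [Finset.mem_insert] at hp
      rcases hp with rfl | hp
      · have h1 : IsLocalRing.maximalIdeal S = ⊥ := by
          refine Submodule.eq_bot_of_le_smul_of_le_jacobson_bot (IsLocalRing.maximalIdeal S) _ hmfg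
            ?_ (IsLocalRing.maximalIdeal_le_jacobson _)
          rw [smul_eq_mul, ← sq]
          exact hmp
        rw [h1] at hspan
        have := hdim.trans hspan
        simp at this
      · have hp' : p ∈ minimalPrimes S := by simpa using hp
        have hpp := hp'.1.1
        have h1 : p = IsLocalRing.maximalIdeal S :=
          le_antisymm (IsLocalRing.le_maximalIdeal hpp.ne_top) hmp
        have h2 : (IsLocalRing.maximalIdeal S).height = 0 := by
          rw [← h1]
          exact Ideal.height_eq_zero_iff.mpr hp'
        rw [← IsLocalRing.maximalIdeal_height_eq_ringKrullDim, h2] at hdim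
        norm_cast at hdim
    let Q := S ⧸ Ideal.span {y}
    have hne : Ideal.span {y} ≠ ⊤ := by
      intro h1
      have : Ideal.span {y} ≤ IsLocalRing.maximalIdeal S := by
        rw [Ideal.span_le]; simpa using hym
      rw [h1] at this
      exact (IsLocalRing.maximalIdeal.isMaximal S).ne_top (top_le_iff.mp this)
    have : Nontrivial Q := Ideal.Quotient.nontrivial_iff.mpr hne
    have : IsLocalRing Q :=
      IsLocalRing.of_surjective' (Ideal.Quotient.mk _) Ideal.Quotient.mk_surjective
    have hQm : IsLocalRing.maximalIdeal Q =
        (IsLocalRing.maximalIdeal S).map (Ideal.Quotient.mk _) :=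
      (IsLocalRing.map_maximalIdeal_of_surjective _ Ideal.Quotient.mk_surjective).symm
    have hQdom : IsDomain Q := by
      apply ih Q
      · classical
        obtain ⟨s, hs1, hs2⟩ := Submodule.FG.exists_span_finset_card_eq_spanFinrank hmfg
        have hy' : y ∈ Submodule.span S (s : Set S) := by rw [hs2]; exact hym
        obtain ⟨a, -, ha⟩ := Submodule.mem_span_finset.mp hy'
        obtain ⟨g, hg, hgu⟩ : ∃ g ∈ s, IsUnit (a g) := by
          by_contra! hcon
          apply hy2
          rw [← ha, sq]
          refine Ideal.sum_mem _ fun g hg => Ideal.mul_mem_mul ?_ ?_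
          · exact (IsLocalRing.mem_maximalIdeal _).mpr (hcon g hg)
          · rw [← hs2]; exact Submodule.subset_span hg
        have hle : IsLocalRing.maximalIdeal Q ≤
            Ideal.span (((s.erase g).image (Ideal.Quotient.mk (Ideal.span {y})) : Finset Q) : Set Q)
            := by
          rw [hQm, ← hs2]
          change Ideal.map _ (Ideal.span (s : Set S)) ≤ _
          rw [Ideal.map_span, Ideal.span_le]
          rintro _ ⟨b, hb, rfl⟩
          by_cases hbg : b = g
          · subst hbg
            rw [← Finset.add_sum_erase s _ hg] at ha
            have h3 := congrArg (Ideal.Quotient.mk (Ideal.span {y})) ha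
            have h4 : Ideal.Quotient.mk (Ideal.span {y}) y = 0 :=
              Ideal.Quotient.eq_zero_iff_mem.mpr (Ideal.mem_span_singleton_self y)
            rw [h4, map_add, map_sum] at h3
            obtain ⟨u, hu⟩ := hgu
            have h5 : Ideal.Quotient.mk (Ideal.span {y}) b = Ideal.Quotient.mk (Ideal.span {y})
                (↑u⁻¹ : S) * (- ∑ g ∈ s.erase b, Ideal.Quotient.mk (Ideal.span {y}) (a g • g)) := by
              rw [neg_eq_of_add_eq_zero_left h3, ← map_mul, ← hu, smul_eq_mul,
                Units.inv_mul_cancel_left]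
            rw [SetLike.mem_coe, h5]
            refine Ideal.mul_mem_left _ _ (Submodule.neg_mem _ (Ideal.sum_mem _ fun g hg => ?_))
            rw [smul_eq_mul, map_mul]
            exact Ideal.mul_mem_left _ _ (Ideal.subset_span (Finset.mem_coe.mpr
              (Finset.mem_image_of_mem _ hg)))
          · exact Ideal.subset_span (Finset.mem_coe.mpr
              (Finset.mem_image_of_mem _ (Finset.mem_erase.mpr ⟨hbg, hb⟩)))
        have heq : IsLocalRing.maximalIdeal Q = Ideal.span
            (((s.erase g).image (Ideal.Quotient.mk (Ideal.span {y})) : Finset Q) : Set Q) := by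
          refine le_antisymm hle ?_
          rw [Ideal.span_le]
          intro q hq
          rw [Finset.mem_coe, Finset.mem_image] at hq
          obtain ⟨b, hb, rfl⟩ := hq
          rw [hQm]
          refine Ideal.mem_map_of_mem _ ?_
          rw [← hs2]
          exact Submodule.subset_span (Finset.mem_of_mem_erase hb)
        rw [heq]
        refine (Submodule.spanFinrank_span_le_ncard_of_finite (Finset.finite_toSet _)).trans ?_
        rw [Set.ncard_coe_finset]
        refine Finset.card_image_le.trans ?_
        rw [Finset.card_erase_of_mem hg]
        omega
      · have h1 := ringKrullDim_le_ringKrullDim_quotient_add_card ({y} : Finset S) (by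
          rw [IsLocalRing.ringJacobson_eq_maximalIdeal]
          simpa using hym)
        rw [Finset.coe_singleton, Finset.card_singleton] at h1
        have h2 := hdim.trans h1
        push_cast at h2
        exact CI_cancel _ 1 _ (by exact_mod_cast h2)
    have hprime : (Ideal.span {y}).IsPrime := (Ideal.Quotient.isDomain_iff_prime _).mp hQdom
    obtain ⟨p, hp, hpy⟩ := Ideal.exists_minimalPrimes_le (bot_le : (⊥ : Ideal S) ≤ Ideal.span {y})
    have hpp : p.IsPrime := hp.1.1
    have hpbot : p = ⊥ := by
      refine Submodule.eq_bot_of_le_smul_of_le_jacobson_bot (IsLocalRing.maximalIdeal S) p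
        (IsNoetherian.noetherian _) ?_ (IsLocalRing.maximalIdeal_le_jacobson _)
      intro a ha
      obtain ⟨b, rfl⟩ := Ideal.mem_span_singleton'.mp (hpy ha)
      rw [mul_comm]
      refine Submodule.smul_mem_smul hym ?_
      exact (hpp.mem_or_mem ha).resolve_right (hyp p hp)
    rw [hpbot] at hpp
    have hnz : NoZeroDivisors S := ⟨fun {a b} hab => by
      simpa using hpp.mem_or_mem (show a * b ∈ (⊥ : Ideal S) by simpa using hab)⟩
    exact NoZeroDivisors.to_isDomain S

theorem CISub_eq_span {S : Type} [CommRing S] (y : ℕ → S) (e : ℕ) :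
    CISub y e S = Ideal.span (y '' (Finset.range e : Set ℕ)) := by
  apply le_antisymm
  · intro z hz
    obtain ⟨a, rfl⟩ := mem_CISub.mp hz
    refine Submodule.sum_mem _ fun i hi => ?_
    rw [smul_eq_mul]
    exact Ideal.mul_mem_right _ _ (Ideal.subset_span ⟨i, hi, rfl⟩)
  · rw [Ideal.span_le]
    rintro _ ⟨i, hi, rfl⟩
    refine mem_CISub.mpr ⟨fun j => if j = i then 1 else 0, ?_⟩
    simp only [smul_eq_mul, mul_ite, mul_one, mul_zero, Finset.sum_ite_eq']
    rw [if_pos (Finset.mem_coe.mp hi)]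

theorem CI_regular {S : Type} [CommRing S] [IsNoetherianRing S] [IsLocalRing S] (y : ℕ → S)
    (e : ℕ) (hy : CISub y e S = IsLocalRing.maximalIdeal S)
    (hdim : ((e : ℕ) : WithBot ℕ∞) ≤ ringKrullDim S) : CIReg y e S := by
  classical
  intro i hi z hz
  have hym : ∀ j < e, y j ∈ IsLocalRing.maximalIdeal S := by
    intro j hj
    rw [← hy, CISub_eq_span]
    exact Ideal.subset_span ⟨j, by simpa using hj, rfl⟩
  rw [CISub_eq_span] at hz ⊢ hy
  rw [show y '' (Finset.range i : Set ℕ) = (((Finset.range i).image y : Finset S) : Set S) by simp]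
    at hz ⊢
  set s := (Finset.range i).image y with hs
  set I := Ideal.span (s : Set S) with hI
  have hIm : I ≤ IsLocalRing.maximalIdeal S := by
    rw [hI, Ideal.span_le]
    intro b hb
    simp only [hs, Finset.coe_image, Set.mem_image, Finset.mem_coe, Finset.mem_range] at hb
    obtain ⟨j, hj, rfl⟩ := hb
    exact hym j (by omega)
  have hne : I ≠ ⊤ := by
    intro h1
    rw [h1] at hIm
    exact (IsLocalRing.maximalIdeal.isMaximal S).ne_top (top_le_iff.mp hIm)
  have : Nontrivial (S ⧸ I) := Ideal.Quotient.nontrivial_iff.mpr hne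
  have : IsLocalRing (S ⧸ I) :=
    IsLocalRing.of_surjective' (Ideal.Quotient.mk _) Ideal.Quotient.mk_surjective
  have hQm : IsLocalRing.maximalIdeal (S ⧸ I) =
      (IsLocalRing.maximalIdeal S).map (Ideal.Quotient.mk _) :=
    (IsLocalRing.map_maximalIdeal_of_surjective _ Ideal.Quotient.mk_surjective).symm
  have hyI : ∀ j < i, y j ∈ I := fun j hj => Ideal.subset_span (by
    rw [hs, Finset.mem_coe]; exact Finset.mem_image_of_mem _ (Finset.mem_range.mpr hj))
  have hdom : IsDomain (S ⧸ I) := by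
    apply CI_domain (e - i)
    · have heq : IsLocalRing.maximalIdeal (S ⧸ I) = Ideal.span
          (((Finset.Ico i e).image (fun j => Ideal.Quotient.mk I (y j)) : Finset (S ⧸ I)) :
            Set (S ⧸ I)) := by
        rw [hQm, ← hy, Ideal.map_span]
        apply le_antisymm
        · rw [Ideal.span_le]
          rintro _ ⟨_, ⟨j, hj, rfl⟩, rfl⟩
          by_cases hji : j < i
          · rw [Ideal.Quotient.eq_zero_iff_mem.mpr (hyI j hji)]
            exact Ideal.zero_mem _
          · refine Ideal.subset_span (Finset.mem_coe.mpr (Finset.mem_image.mpr ⟨j, ?_, rfl⟩))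
            simp at hj
            simp; omega
        · rw [Ideal.span_le]
          intro q hq
          rw [Finset.mem_coe, Finset.mem_image] at hq
          obtain ⟨j, hj, rfl⟩ := hq
          simp at hj
          exact Ideal.subset_span ⟨_, ⟨j, by simp; omega, rfl⟩, rfl⟩
      rw [heq]
      refine (Submodule.spanFinrank_span_le_ncard_of_finite (Finset.finite_toSet _)).trans ?_
      rw [Set.ncard_coe_finset]
      refine Finset.card_image_le.trans ?_
      simp
    · have h1 := ringKrullDim_le_ringKrullDim_quotient_add_card s (by
        rw [IsLocalRing.ringJacobson_eq_maximalIdeal]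
        exact Ideal.span_le.mp hIm)
      have h2 : (s.card : WithBot ℕ∞) ≤ (i : WithBot ℕ∞) := by
        have : s.card ≤ i := by
          refine Finset.card_image_le.trans ?_
          simp
        exact_mod_cast this
      have h3 : ((e : ℕ) : WithBot ℕ∞) ≤ ringKrullDim (S ⧸ I) + i :=
        (hdim.trans h1).trans (by gcongr)
      obtain ⟨j, rfl⟩ : ∃ j, e = j + i := ⟨e - i, by omega⟩
      rw [Nat.add_sub_cancel]
      push_cast at h3
      exact CI_cancel _ _ _ h3
  have hprime : I.IsPrime := (Ideal.Quotient.isDomain_iff_prime _).mp hdom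
  refine (hprime.mem_or_mem (by simpa using hz)).resolve_left fun hcon => ?_
  have heq : IsLocalRing.maximalIdeal S = Ideal.span
      ((((Finset.range e).erase i).image y : Finset S) : Set S) := by
    rw [← hy]
    apply le_antisymm
    · rw [Ideal.span_le]
      rintro _ ⟨j, hj, rfl⟩
      by_cases hji : j = i
      · subst hji
        refine Ideal.span_mono ?_ hcon
        intro b hb
        simp only [hs, Finset.coe_image, Set.mem_image, Finset.mem_coe, Finset.mem_range] at hb
        obtain ⟨k, hk, rfl⟩ := hb
        exact Finset.mem_coe.mpr (Finset.mem_image_of_mem _ (by simp; omega))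
      · refine Ideal.subset_span (Finset.mem_coe.mpr (Finset.mem_image_of_mem _ ?_))
        simp at hj
        simp; omega
    · apply Ideal.span_mono
      intro b hb
      simp only [Finset.coe_image, Set.mem_image, Finset.mem_coe, Finset.mem_erase] at hb
      obtain ⟨k, hk, rfl⟩ := hb
      exact ⟨k, hk.2, rfl⟩
  have h1 : (IsLocalRing.maximalIdeal S).spanFinrank ≤ e - 1 := by
    rw [heq]
    refine (Submodule.spanFinrank_span_le_ncard_of_finite (Finset.finite_toSet _)).trans ?_
    rw [Set.ncard_coe_finset]
    refine Finset.card_image_le.trans ?_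
    rw [Finset.card_erase_of_mem (Finset.mem_range.mpr hi)]
    simp
  have h2 := hdim.trans (ringKrullDim_le_spanFinrank_maximalIdeal S)
  have h3 : e ≤ (IsLocalRing.maximalIdeal S).spanFinrank := by exact_mod_cast h2
  omega

end Regular

/-! ### Computing Tor from an explicit resolution -/
section TorComp
open CategoryTheory
variable {A : Type} [CommRing A]

theorem CI_exists_res [IsNoetherianRing A] (N : Type) [AddCommGroup N] [Module A N]
    [Module.Finite A N] : ∃ (r : ℕ → ℕ) (d : ∀ n, (Fin (r (n+1)) → A) →ₗ[A] (Fin (r n) → A))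
      (ε : (Fin (r 0) → A) →ₗ[A] N), Function.Surjective ε ∧
      LinearMap.range (d 0) = LinearMap.ker ε ∧
      ∀ n, LinearMap.range (d (n+1)) = LinearMap.ker (d n) := by
  have key : ∀ (m : ℕ) (Q : Type) [AddCommGroup Q] [Module A Q] (f : (Fin m → A) →ₗ[A] Q),
      ∃ (k : ℕ) (g : (Fin k → A) →ₗ[A] (Fin m → A)), LinearMap.range g = LinearMap.ker f := by
    intro m Q _ _ f
    obtain ⟨k, g, hg⟩ := Module.Finite.exists_fin' A (LinearMap.ker f)
    refine ⟨k, (LinearMap.ker f).subtype ∘ₗ g, ?_⟩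
    rw [LinearMap.range_comp, LinearMap.range_eq_top.mpr hg, Submodule.map_top,
      Submodule.range_subtype]
  obtain ⟨r0, ε, hε⟩ := Module.Finite.exists_fin' A N
  obtain ⟨r1, d0, hd0⟩ := key r0 N ε
  let T := Σ m : ℕ, Σ k : ℕ, (Fin k → A) →ₗ[A] (Fin m → A)
  let nxt : T → T := fun s => ⟨s.2.1, (key s.2.1 _ s.2.2).choose,
    (key s.2.1 _ s.2.2).choose_spec.choose⟩
  have hn : ∀ s : T, LinearMap.range (nxt s).2.2 = LinearMap.ker s.2.2 := fun s =>
    (key s.2.1 _ s.2.2).choose_spec.choose_spec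
  let st : ℕ → T := fun n => Nat.rec ⟨r0, r1, d0⟩ (fun _ s => nxt s) n
  exact ⟨fun n => (st n).1, fun n => (st n).2.2, ε, hε, hd0, fun n => hn (st n)⟩

theorem CI_tor_iff (M N : Type) [AddCommGroup M] [Module A M] [AddCommGroup N] [Module A N]
    (P : ℕ → Type) [∀ n, AddCommGroup (P n)] [∀ n, Module A (P n)]
    [∀ n, Module.Projective A (P n)]
    (d : ∀ n, P (n+1) →ₗ[A] P n) (ε : P 0 →ₗ[A] N) (hε : Function.Surjective ε)
    (h0 : LinearMap.range (d 0) = LinearMap.ker ε)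
    (h : ∀ n, LinearMap.range (d (n+1)) = LinearMap.ker (d n)) (n : ℕ) :
    Subsingleton (torGroup A M N (n+1)) ↔
      LinearMap.ker ((d n).lTensor M) ≤ LinearMap.range ((d (n+1)).lTensor M) := by
  have hdd : ∀ n, d n ∘ₗ d (n+1) = 0 := by
    intro n
    exact LinearMap.range_le_ker_iff.mp (h n).le
  let C : ChainComplex (ModuleCat A) ℕ := ChainComplex.of (fun n => ModuleCat.of A (P n))
    (fun n => ModuleCat.ofHom (d n)) (fun n => by
      rw [← ModuleCat.ofHom_comp, hdd]; rfl)
  have hCd : ∀ n, C.d (n+1) n = ModuleCat.ofHom (d n) := fun n =>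
    ChainComplex.of_d (fun n => ModuleCat.of A (P n)) (fun n => ModuleCat.ofHom (d n)) n
  have hz0 : C.d 1 0 ≫ ModuleCat.ofHom ε = 0 := by
    rw [hCd 0, ← ModuleCat.ofHom_comp, LinearMap.range_le_ker_iff.mp h0.le]; rfl
  let R : ProjectiveResolution (ModuleCat.of A N) :=
    { complex := C
      projective := fun n => by
        change Projective (ModuleCat.of A (P n))
        infer_instance
      π := (ChainComplex.toSingle₀Equiv _ _).symm ⟨ModuleCat.ofHom ε, hz0⟩
      quasiIso := ⟨fun n => by
        cases n
        · rw [ChainComplex.quasiIsoAt₀_iff, ShortComplex.quasiIso_iff_of_zeros']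
          · have e1 : (ShortComplex.mk (ModuleCat.ofHom (d 0)) (ModuleCat.ofHom ε)
                (by rw [← hCd 0]; exact hz0)).Exact := by
              rw [ShortComplex.moduleCat_exact_iff_range_eq_ker]; exact h0
            have e2 : Epi (ModuleCat.ofHom ε) := (ModuleCat.epi_iff_surjective _).mpr hε
            refine (ShortComplex.exact_and_epi_g_iff_of_iso ?_).2 ⟨e1, e2⟩
            refine ShortComplex.isoMk (Iso.refl _) (Iso.refl _) (Iso.refl _) ?_ ?_
            · simp [hCd 0]
              exact (Category.id_comp _).trans (Category.comp_id _).symm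
            · simp
              exact (Category.id_comp _).trans (Category.comp_id _).symm
          all_goals rfl
        · rename_i n
          rw [quasiIsoAt_iff_exactAt']
          · rw [HomologicalComplex.exactAt_iff' _ (n + 1 + 1) (n + 1) n (by simp) (by simp)]
            rw [ShortComplex.moduleCat_exact_iff_range_eq_ker]
            change LinearMap.range (C.d (n+1+1) (n+1)).hom = LinearMap.ker (C.d (n+1) n).hom
            rw [hCd, hCd]
            exact h n
          · apply ChainComplex.exactAt_succ_single_obj⟩ }
  have iso := R.isoLeftDerivedObj ((MonoidalCategory.tensoringLeft (ModuleCat A)).obj (ModuleCat.of A M)) (n+1)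
  change _ ≅ HomologicalComplex.homology _ (n+1) at iso
  have e1 : Subsingleton (torGroup A M N (n+1)) ↔ Limits.IsZero (torGroup A M N (n+1)) := 
    ModuleCat.isZero_iff_subsingleton.symm
  rw [e1]
  have e2 : Limits.IsZero (torGroup A M N (n+1)) ↔ _ := iso.isZero_iff
  rw [e2, ← HomologicalComplex.exactAt_iff_isZero_homology, 
    HomologicalComplex.exactAt_iff' _ (n + 1 + 1) (n + 1) n (by simp) (by simp),
    ShortComplex.moduleCat_exact_iff_ker_sub_range]
  change LinearMap.ker (ModuleCat.Hom.hom (MonoidalCategory.whiskerLeft (ModuleCat.of A M) (C.d (n+1) n))) ≤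
    LinearMap.range (ModuleCat.Hom.hom (MonoidalCategory.whiskerLeft (ModuleCat.of A M) (C.d (n+1+1) (n+1)))) ↔ _
  rw [hCd, hCd]
  exact Iff.rfl

end TorComp

/-! ### Matrix formulation and the transfer between the rings -/
section Transfer

/-- Exactness of `M^s → M^q → M^p` for the maps given by two matrices. -/
def CIMatEx {k : Type} [CommRing k] (p q s : ℕ) (D E : ℕ → ℕ → k)
    (M : Type) [AddCommGroup M] [Module k M] : Prop :=
  ∀ v : Fin q → M, (∀ i : Fin p, ∑ j : Fin q, D i j • v j = 0) →
    ∃ w : Fin s → M, ∀ i : Fin q, v i = ∑ j : Fin s, E i j • w j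

/-- The linear map of a matrix. -/
def CILin {k : Type} [CommRing k] (p q : ℕ) (D : ℕ → ℕ → k) : (Fin q → k) →ₗ[k] (Fin p → k) :=
  Matrix.toLin' (Matrix.of fun (i : Fin p) (j : Fin q) => D i j)

theorem CILin_apply {k : Type} [CommRing k] (p q : ℕ) (D : ℕ → ℕ → k) (v : Fin q → k) (i : Fin p) :
    CILin p q D v i = ∑ j : Fin q, D i j * v j := by
  simp [CILin, Matrix.mulVec, dotProduct]

theorem CILin_tensor {k : Type} [CommRing k] (p q : ℕ) (D : ℕ → ℕ → k)
    (M : Type) [AddCommGroup M] [Module k M] (z : TensorProduct k M (Fin q → k)) (i : Fin p) :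
    TensorProduct.piScalarRight k k M (Fin p) ((CILin p q D).lTensor M z) i =
      ∑ j : Fin q, D i j • TensorProduct.piScalarRight k k M (Fin q) z j := by
  induction z with
  | zero => simp
  | add a b ha hb => simp only [map_add, Pi.add_apply, ha, hb, smul_add, Finset.sum_add_distrib]
  | tmul m f =>
    simp [TensorProduct.piScalarRight_apply, TensorProduct.piScalarRightHom_tmul, CILin_apply, Finset.sum_smul, mul_smul]

theorem CIMatEx_iff {k : Type} [CommRing k] (p q s : ℕ) (D E : ℕ → ℕ → k)
    (M : Type) [AddCommGroup M] [Module k M] :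
    LinearMap.ker ((CILin p q D).lTensor M) ≤ LinearMap.range ((CILin q s E).lTensor M) ↔
      CIMatEx p q s D E M := by
  constructor
  · intro h v hv
    let z := (TensorProduct.piScalarRight k k M (Fin q)).symm v
    have hz : z ∈ LinearMap.ker ((CILin p q D).lTensor M) := by
      rw [LinearMap.mem_ker]
      apply (TensorProduct.piScalarRight k k M (Fin p)).injective
      funext i
      rw [CILin_tensor]
      simpa [z] using hv i
    obtain ⟨u, hu⟩ := h hz
    refine ⟨TensorProduct.piScalarRight k k M (Fin s) u, fun i => ?_⟩
    rw [← CILin_tensor, hu]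
    simp [z]
  · intro h z hz
    obtain ⟨w, hw⟩ := h (TensorProduct.piScalarRight k k M (Fin q) z) (fun i => by
      rw [← CILin_tensor, LinearMap.mem_ker.mp hz]; simp)
    refine ⟨(TensorProduct.piScalarRight k k M (Fin s)).symm w, ?_⟩
    apply (TensorProduct.piScalarRight k k M (Fin q)).injective
    funext i
    rw [CILin_tensor, hw i]
    simp

theorem CISub_pi {S : Type} [CommRing S] {x : ℕ → S} {c p : ℕ} {z : Fin p → S} :
    z ∈ CISub x c (Fin p → S) ↔ ∀ i, z i ∈ CISub x c S := by
  constructor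
  · intro h i
    exact CISub_map (LinearMap.proj i) h
  · intro h
    choose a ha using fun i => mem_CISub.mp (h i)
    refine mem_CISub.mpr ⟨fun l i => a i l, ?_⟩
    funext i
    simpa using ha i

open IsLocalRing in
theorem CI_main {A S B : Type} [CommRing A] [IsLocalRing A] [CommRing S] [IsNoetherianRing S]
    [IsLocalRing S] [CommRing B] [Algebra A B] [Algebra S B]
    (x : ℕ → S) (c : ℕ) (hx : CIReg x c S)
    (hsurj : Function.Surjective (algebraMap S B))
    (hker : ∀ s, algebraMap S B s = 0 ↔ s ∈ CISub x c S)
    (y : ℕ → S) (e : ℕ) (hy : CIReg y e S) (hym : CISub y e S = maximalIdeal S)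
    (hm : (maximalIdeal S).map (algebraMap S B) ≤ (maximalIdeal A).map (algebraMap A B))
    (M : Type) [AddCommGroup M] [Module A M] [Module S M] [Module B M] [IsScalarTower A B M]
    [IsScalarTower S B M] [Module.Finite B M]
    (r : ℕ → ℕ) (D : ℕ → ℕ → ℕ → A)
    (hex : ∀ n, CIMatEx (r n) (r (n+1)) (r (n+2)) (D n) (D (n+1)) B)
    (hDD : ∀ n (i : Fin (r n)) (j : Fin (r (n+2))),
      ∑ l : Fin (r (n+1)), D n i l * D (n+1) l j = 0)
    (I₁ I₂ : Ideal A) (hI₁ : ∀ a ∈ I₁, ∀ m : M, a • m = 0)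
    (hI₂ : ∀ a ∈ I₂, ∀ u : Fin (r 0) → B, ∃ w : Fin (r 1) → B, ∀ i : Fin (r 0),
      a • u i = ∑ j : Fin (r 1), D 0 i j • w j)
    (k : ℕ) (hk : maximalIdeal A ^ k ≤ I₁ ⊔ I₂) :
    ∃ K, ∀ n ≥ K, CIMatEx (r n) (r (n+1)) (r (n+2)) (D n) (D (n+1)) M →
      CIMatEx (r (n+2)) (r (n+3)) (r (n+4)) (D (n+2)) (D (n+3)) M := by
  choose lft hlft using hsurj
  let L := 3 + c
  let r' : ℕ → ℕ := fun n => if n < L then 0 else r (n - L)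
  have hr' : ∀ n, r' (n + L) = r n := fun n => by simp [r']
  have hr3 : ∀ m, r' (m+L) = r m ∧ r' (m+L+1) = r (m+1) ∧ r' (m+L+2) = r (m+2) := by
    intro m
    refine ⟨hr' m, ?_, ?_⟩
    · rw [← hr' (m+1)]; congr 1; omega
    · rw [← hr' (m+2)]; congr 1; omega
  let Dt : ℕ → ℕ → ℕ → S := fun n i j => lft (algebraMap A B (D n i j))
  have hDt : ∀ n i j, algebraMap S B (Dt n i j) = algebraMap A B (D n i j) := fun n i j => hlft _
  let F : ℕ → Type := fun n => Fin (r' n) → S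
  let d : ∀ n, (Fin (r' (n+1)) → S) →ₗ[S] (Fin (r' n) → S) := fun n => CILin (r' n) (r' (n+1)) (Dt (n - L))
  have hpi : ∀ {p : ℕ} {z : Fin p → S}, z ∈ CISub x c (Fin p → S) ↔ ∀ i, algebraMap S B (z i) = 0 := by
    intro p z
    rw [CISub_pi]
    exact forall_congr' fun i => (hker _).symm
  have hsub : ∀ n < L, r' n = 0 := fun n hn => by simp [r', hn]
  have hddm : ∀ n (z : Fin (r' (n+2)) → S), d n (d (n+1) z) ∈ CISub x c (Fin (r' n) → S) := by
    intro n z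
    rw [hpi]
    intro i
    by_cases hn : n < L
    · exact absurd i.2 (by simp [hsub n hn])
    obtain ⟨m, rfl⟩ : ∃ m, n = m + L := ⟨n - L, by omega⟩
    have h1 : m + L + 1 - L = m + 1 := by omega
    simp only [d, CILin_apply, map_sum, map_mul, hDt, h1, Nat.add_sub_cancel]
    have h2 : ∀ j : Fin (r' (m+L+2)), ∑ l : Fin (r' (m+L+1)), D m i l * D (m+1) l j = 0 := by
      obtain ⟨e1, e2, e3⟩ := hr3 m
      revert i
      generalize r' (m+L) = a at *
      generalize r' (m+L+1) = a2 at *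
      generalize r' (m+L+2) = a3 at *
      subst e1 e2 e3
      exact hDD m
    simp only [Finset.mul_sum]
    rw [Finset.sum_comm]
    refine Finset.sum_eq_zero fun j _ => ?_
    have := congrArg (algebraMap A B) (h2 j)
    simp only [map_sum, map_mul, map_zero] at this
    simp only [← mul_assoc, ← Finset.sum_mul]
    rw [this, zero_mul]
  choose t0 ht0 using fun n => CISub_lift (d n ∘ₗ d (n+1)) (hddm n)
  let t : ℕ → ∀ n, (Fin (r' (n+2)) → S) →ₗ[S] (Fin (r' n) → S) := fun i n => t0 n i
  let J : Set S := {a | ∀ f : Fin (r' (3+c)) → S, ∃ g, a • f - d (3+c) g ∈ CISub x c (Fin (r' (3+c)) → S)}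
  have hdata : CIData J x c (fun n => Fin (r' n) → S) d t :=
    { free := fun n => inferInstance
      fin := fun n => inferInstance
      dd := fun n z => ht0 n z
      low := fun n hn => by
        change Subsingleton (Fin (r' n) → S)
        rw [hsub n hn]; infer_instance
      ex := by
        intro n hn f hf
        obtain ⟨m, rfl⟩ : ∃ m, n = m + L := ⟨n - L, by omega⟩
        have h1 : m + L + 1 - L = m + 1 := by omega
        have hexm : CIMatEx (r' (m+L)) (r' (m+L+1)) (r' (m+L+2)) (D m) (D (m+1)) B := by
          obtain ⟨e1, e2, e3⟩ := hr3 m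
          rw [e1, e2, e3]; exact hex m
        rw [hpi] at hf
        obtain ⟨w, hw⟩ := hexm (fun j => algebraMap S B (f j)) (fun i => by
          have := hf i
          simpa [d, CILin_apply, map_sum, map_mul, hDt, Algebra.smul_def] using this)
        refine ⟨fun j => lft (w j), hpi.mpr fun i => ?_⟩
        have := hw i
        simp only [Algebra.smul_def] at this
        simp [d, CILin_apply, map_sum, map_mul, hDt, h1, hlft, this]
      ann := fun a ha f => ha f }
  have hJ : maximalIdeal S ^ k ≤ Ideal.span J ⊔ Module.annihilator S M := by
    have hmap : (maximalIdeal S ^ k).map (algebraMap S B) ≤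
        (Ideal.span J ⊔ Module.annihilator S M).map (algebraMap S B) := by
      rw [Ideal.map_pow]
      refine (Ideal.pow_right_mono hm k).trans ?_
      rw [← Ideal.map_pow]
      refine (Ideal.map_mono hk).trans ?_
      rw [Ideal.map_sup, sup_le_iff, Ideal.map_le_iff_le_comap, Ideal.map_le_iff_le_comap]
      constructor
      · intro a ha
        rw [Ideal.mem_comap, ← hlft (algebraMap A B a)]
        refine Ideal.mem_map_of_mem _ (Ideal.mem_sup_right ?_)
        rw [Module.mem_annihilator]
        intro m
        rw [← algebraMap_smul B, hlft, algebraMap_smul]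
        exact hI₁ a ha m
      · intro a ha
        rw [Ideal.mem_comap, ← hlft (algebraMap A B a)]
        refine Ideal.mem_map_of_mem _ (Ideal.mem_sup_left (Ideal.subset_span ?_))
        intro f
        have h0 : 3 + c - L = 0 := by omega
        have key : ∀ u : Fin (r' (3+c)) → B, ∃ w : Fin (r' (3+c+1)) → B, ∀ i : Fin (r' (3+c)),
            a • u i = ∑ j : Fin (r' (3+c+1)), D 0 i j • w j := by
          obtain ⟨e1, e2, e3⟩ := hr3 0
          rw [zero_add] at e1 e2
          rw [show r' (3+c) = r 0 from e1, show r' (3+c+1) = r 1 from e2]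
          exact hI₂ a ha
        obtain ⟨w, hw⟩ := key (fun j => algebraMap S B (f j))
        refine ⟨fun j => lft (w j), hpi.mpr fun i => ?_⟩
        have := hw i
        simp only [Algebra.smul_def] at this
        simp [d, CILin_apply, map_sum, map_mul, hDt, h0, hlft, this]
    intro s hs
    obtain ⟨s', hs', he⟩ := (Ideal.mem_map_iff_of_surjective _ (fun b => ⟨lft b, hlft b⟩)).mp
      (hmap (Ideal.mem_map_of_mem _ hs))
    have : s = s' + (s - s') := by ring
    rw [this]
    refine Ideal.add_mem _ hs' (Ideal.mem_sup_right ?_)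
    rw [Module.mem_annihilator]
    intro m
    rw [← algebraMap_smul B, map_sub, he, sub_self, zero_smul]
  have hM : ∀ i < c, ∀ m : M, x i • m = 0 := by
    intro i hi m
    have : algebraMap S B (x i) = 0 := (hker _).mpr (mem_CISub.mpr ⟨Pi.single i 1, by
      rw [Finset.sum_eq_single i]
      · simp
      · intro j _ hj; simp [hj]
      · intro h; exact absurd (Finset.mem_range.mpr hi) h⟩)
    rw [← algebraMap_smul B, this, zero_smul]
  have : Module.Finite S B := Module.Finite.of_surjective (Algebra.linearMap S B)
    (fun b => ⟨lft b, hlft b⟩)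
  have : Module.Finite S M := Module.Finite.trans B M
  have hart := CIData.art (M := M) (J := J) (CIData.base k hJ hy hym) c
    (fun n => Fin (r' n) → S) d t hx hM hdata
  obtain ⟨K, hK⟩ := CIArt.propagate _ _ (hdata.tensor_dd hM) (hdata.tensor_comm hx hM) hart
  refine ⟨K, fun n hn h => ?_⟩
  have hconv : ∀ m n, m = n + L →
      (LinearMap.ker ((d m).lTensor M) ≤ LinearMap.range ((d (m+1)).lTensor M) ↔
        CIMatEx (r n) (r (n+1)) (r (n+2)) (D n) (D (n+1)) M) := by
    rintro m n rfl
    have h1 : n + L + 1 - L = n + 1 := by omega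
    simp only [d, CIMatEx_iff]
    obtain ⟨e1, e2, e3⟩ := hr3 n
    rw [e1, e2, e3, h1, Nat.add_sub_cancel]
    have hs : ∀ n i j (m : M), Dt n i j • m = D n i j • m := fun n i j m => by
      rw [← algebraMap_smul B (Dt n i j) m, hDt, algebraMap_smul]
    simp only [CIMatEx, hs]
  exact (hconv (n+L+2) (n+2) (by omega)).mp (hK (n+L) (by omega) ((hconv (n+L) n rfl).mpr h))

end Transfer

/-! ### Assembling the pieces -/
section Assemble
open IsLocalRing

theorem CI_finite_length_kill {A : Type} [CommRing A] [IsLocalRing A] {T : Type} [AddCommGroup T]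
    [Module A T] (h : IsFiniteLength A T) : ∃ k, maximalIdeal A ^ k ≤ Module.annihilator A T := by
  induction h with
  | of_subsingleton => exact ⟨0, fun a _ => by
      rw [Module.mem_annihilator]; intro m; exact Subsingleton.elim _ _⟩
  | @of_simple_quotient T _ _ Q _ hQ ih =>
    obtain ⟨k, hk⟩ := ih
    refine ⟨k + 1, ?_⟩
    rw [pow_succ, Ideal.mul_le]
    intro a ha b hb
    rw [Module.mem_annihilator]
    intro m
    have hmax : Module.annihilator A (T ⧸ Q) = maximalIdeal A :=
      eq_maximalIdeal (IsSimpleModule.annihilator_isMaximal)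
    have h1 : b • m ∈ Q := by
      rw [← hmax, Module.mem_annihilator] at hb
      have := hb (Submodule.Quotient.mk m)
      rwa [← Submodule.Quotient.mk_smul, Submodule.Quotient.mk_eq_zero] at this
    have h2 := Module.mem_annihilator.mp (hk ha) ⟨b • m, h1⟩
    rw [mul_smul]
    exact congrArg Subtype.val h2

theorem CI_pow_le {A : Type} [CommRing A] [IsNoetherianRing A] [IsLocalRing A] (M N : Type)
    [AddCommGroup M] [Module A M] [Module.Finite A M] [AddCommGroup N] [Module A N]
    [Module.Finite A N] (h : IsFiniteLength A (TensorProduct A M N)) :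
    ∃ k, maximalIdeal A ^ k ≤ Module.annihilator A M ⊔ Module.annihilator A N := by
  obtain ⟨k, hk⟩ := CI_finite_length_kill h
  have hrad : maximalIdeal A ≤ (Module.annihilator A M ⊔ Module.annihilator A N).radical := by
    rw [Ideal.radical_eq_sInf]
    refine le_sInf ?_
    rintro q ⟨hq, hqp⟩
    rw [sup_le_iff] at hq
    let p : PrimeSpectrum A := ⟨q, hqp⟩
    have hM : p ∈ Module.support A M := by
      rw [Module.support_eq_zeroLocus]; exact hq.1
    have hN : p ∈ Module.support A N := by
      rw [Module.support_eq_zeroLocus]; exact hq.2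
    have hMN : p ∈ Module.support A (TensorProduct A M N) := by
      rw [Module.mem_support_iff_nontrivial_residueField_tensorProduct] at hM hN ⊢
      have e := TensorProduct.AlgebraTensorModule.distribBaseChange A p.asIdeal.ResidueField M N
      rw [e.nontrivial_congr]
      infer_instance
    rw [Module.support_eq_zeroLocus] at hMN
    exact hqp.le_of_pow_le (hk.trans hMN)
  obtain ⟨l, hl⟩ := Ideal.exists_radical_pow_le_of_fg
    (Module.annihilator A M ⊔ Module.annihilator A N) (IsNoetherian.noetherian _)
  exact ⟨l, (Ideal.pow_right_mono hrad l).trans hl⟩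

theorem CI_exists_mat {A : Type} [CommRing A] [IsNoetherianRing A] (N : Type) [AddCommGroup N]
    [Module A N] [Module.Finite A N] : ∃ (r : ℕ → ℕ) (D : ℕ → ℕ → ℕ → A)
      (ε : (Fin (r 0) → A) →ₗ[A] N), Function.Surjective ε ∧
      LinearMap.range (CILin (r 0) (r 1) (D 0)) = LinearMap.ker ε ∧
      ∀ n, LinearMap.range (CILin (r (n+1)) (r (n+2)) (D (n+1))) =
        LinearMap.ker (CILin (r n) (r (n+1)) (D n)) := by
  classical
  obtain ⟨r, d, ε, h1, h2, h3⟩ := CI_exists_res (A := A) N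
  let D : ℕ → ℕ → ℕ → A := fun n i j =>
    if h : i < r n ∧ j < r (n+1) then LinearMap.toMatrix' (d n) ⟨i, h.1⟩ ⟨j, h.2⟩ else 0
  have hD : ∀ n, CILin (r n) (r (n+1)) (D n) = d n := by
    intro n
    have : (Matrix.of fun (i : Fin (r n)) (j : Fin (r (n+1))) => D n i j) =
        LinearMap.toMatrix' (d n) := by
      ext i j
      simp [D]
    rw [CILin, this, Matrix.toLin'_toMatrix']
  refine ⟨r, D, ε, h1, ?_, fun n => ?_⟩
  · rw [hD 0]; exact h2
  · rw [hD, hD]; exact h3 n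

theorem CIMatEx_baseChange {A B : Type} [CommRing A] [CommRing B] [Algebra A B]
    [Module.FaithfullyFlat A B] (M : Type) [AddCommGroup M] [Module A M] (p q s : ℕ)
    (D E : ℕ → ℕ → A) (hDE : CILin p q D ∘ₗ CILin q s E = 0) :
    CIMatEx p q s D E M ↔ CIMatEx p q s D E (TensorProduct A B M) := by
  rw [← CIMatEx_iff, ← CIMatEx_iff]
  have key : ∀ (Q : Type) [AddCommGroup Q] [Module A Q],
      (LinearMap.ker ((CILin p q D).lTensor Q) ≤ LinearMap.range ((CILin q s E).lTensor Q) ↔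
        Function.Exact ((CILin q s E).lTensor Q) ((CILin p q D).lTensor Q)) := by
    intro Q _ _
    rw [LinearMap.exact_iff]
    refine ⟨fun h => le_antisymm h ?_, fun h => h.le⟩
    rw [LinearMap.range_le_ker_iff, ← LinearMap.lTensor_comp, hDE, LinearMap.lTensor_zero]
  rw [key, key, ← Module.FaithfullyFlat.lTensor_exact_iff_exact A B]
  refine Function.Exact.iff_of_ladder_linearEquiv (e₁ := TensorProduct.assoc A B M _)
    (e₂ := TensorProduct.assoc A B M _) (e₃ := TensorProduct.assoc A B M _) ?_ ?_
  · rw [LinearMap.lTensor_tensor]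
    ext; simp
  · rw [LinearMap.lTensor_tensor]
    ext; simp

theorem CI_final {A S B : Type} [CommRing A] [IsNoetherianRing A] [IsLocalRing A] [CommRing S]
    [IsNoetherianRing S] [IsLocalRing S] [CommRing B] [Algebra A B] [Algebra S B]
    [Module.FaithfullyFlat A B]
    (x : ℕ → S) (c : ℕ) (hx : CIReg x c S)
    (hsurj : Function.Surjective (algebraMap S B))
    (hker : ∀ s, algebraMap S B s = 0 ↔ s ∈ CISub x c S)
    (y : ℕ → S) (e : ℕ) (hy : CIReg y e S) (hym : CISub y e S = maximalIdeal S)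
    (hm : (maximalIdeal S).map (algebraMap S B) ≤ (maximalIdeal A).map (algebraMap A B))
    (M N : Type) [AddCommGroup M] [Module A M] [Module.Finite A M]
    [AddCommGroup N] [Module A N] [Module.Finite A N]
    (hfl : IsFiniteLength A (TensorProduct A M N)) :
    ∃ K, ∀ n ≥ K, Subsingleton (torGroup A M N n) → Subsingleton (torGroup A M N (n+2)) := by
  classical
  obtain ⟨k, hk⟩ := CI_pow_le M N hfl
  obtain ⟨r, D, ε, h1, h2, h3⟩ := CI_exists_mat (A := A) N
  have : SMulCommClass A S B := ⟨fun a s b => by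
    simp only [Algebra.smul_def]; ring⟩
  have hcomp : ∀ n, CILin (r n) (r (n+1)) (D n) ∘ₗ CILin (r (n+1)) (r (n+2)) (D (n+1)) = 0 :=
    fun n => LinearMap.range_le_ker_iff.mp (h3 n).le
  obtain ⟨K, hK⟩ := CI_main (A := A) (B := B) x c hx hsurj hker y e hy hym hm
    (TensorProduct A B M) r D
    (by
      intro n
      rw [← CIMatEx_iff]
      have : Function.Exact (CILin (r (n+1)) (r (n+2)) (D (n+1))) (CILin (r n) (r (n+1)) (D n)) := by
        rw [LinearMap.exact_iff]; exact (h3 n).symm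
      exact (LinearMap.exact_iff.mp (Module.Flat.lTensor_exact B this)).le)
    (by
      intro n i j
      have := congrFun (LinearMap.congr_fun (hcomp n) (Pi.single j 1)) i
      simpa [CILin_apply, Pi.single_apply] using this)
    (Module.annihilator A M) (Module.annihilator A N)
    (by
      intro a ha m
      induction m with
      | zero => simp
      | add p q hp hq => rw [smul_add, hp, hq, add_zero]
      | tmul b m => rw [← TensorProduct.tmul_smul, Module.mem_annihilator.mp ha, TensorProduct.tmul_zero])
    (by
      intro a ha u
      have hW : ∀ l : Fin (r 0), ∃ W, CILin (r 0) (r 1) (D 0) W = a • Pi.single l 1 := by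
        intro l
        rw [← LinearMap.mem_range, h2, LinearMap.mem_ker, map_smul]
        exact Module.mem_annihilator.mp ha _
      choose W hW using hW
      refine ⟨fun j => ∑ l, W l j • u l, fun i => ?_⟩
      simp only [Finset.smul_sum]
      rw [Finset.sum_comm]
      have h5 : ∀ l, ∑ j : Fin (r 1), D 0 i j • W l j • u l = (a * (Pi.single l 1 : Fin (r 0) → A) i) • u l := by
        intro l
        have := congrFun (hW l) i
        rw [CILin_apply] at this
        simp only [Pi.smul_apply, smul_eq_mul] at this
        rw [← this, Finset.sum_smul]
        simp only [mul_smul]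
      simp only [h5, Pi.single_apply]
      simp)
    k hk
  have htor : ∀ n, Subsingleton (torGroup A M N (n+1)) ↔
      CIMatEx (r n) (r (n+1)) (r (n+2)) (D n) (D (n+1)) (TensorProduct A B M) := by
    intro n
    rw [← CIMatEx_baseChange M _ _ _ _ _ (hcomp n), ← CIMatEx_iff]
    exact CI_tor_iff M N (fun n => Fin (r n) → A) (fun n => CILin (r n) (r (n+1)) (D n)) ε h1 h2 h3 n
  refine ⟨K + 1, fun n hn h => ?_⟩
  obtain ⟨m, rfl⟩ : ∃ m, n = m + 1 := ⟨n - 1, by omega⟩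
  exact (htor (m+2)).mpr (hK m (by omega) ((htor m).mp h))

end Assemble

section RegSeq

theorem CIReg_of_isRegular {S : Type} [CommRing S] (c : ℕ) (x : Fin c → S) (x' : ℕ → S)
    (hx' : ∀ i : Fin c, x' i = x i)
    (h : RingTheory.Sequence.IsWeaklyRegular S (List.ofFn x)) : CIReg x' c S := by
  intro i hi z hz
  have h1 := h.regular_mod_prev i (by simpa using hi)
  have htake : Ideal.ofList (List.take i (List.ofFn x)) = CISub x' i S := by
    rw [CISub_eq_span, Ideal.ofList]
    congr 1
    ext s
    simp only [Set.mem_ofPred_eq, Set.mem_image, Finset.coe_range, Set.mem_Iio]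
    rw [List.mem_take_iff_getElem]
    constructor
    · rintro ⟨j, hj, rfl⟩
      simp only [List.length_ofFn, lt_inf_iff] at hj
      exact ⟨j, hj.1, by simpa using hx' ⟨j, hj.2⟩⟩
    · rintro ⟨j, hj, rfl⟩
      refine ⟨j, by simp; omega, ?_⟩
      simpa using (hx' ⟨j, by omega⟩).symm
  rw [htake] at h1
  have h2 : ((CISub x' i S : Ideal S) • (⊤ : Submodule S S)) = CISub x' i S := by simp
  rw [h2] at h1
  have h3 := h1 (a₁ := Submodule.Quotient.mk z) (a₂ := 0) (by
    simp only [smul_zero]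
    rw [← Submodule.Quotient.mk_smul, Submodule.Quotient.mk_eq_zero]
    simpa [← hx' ⟨i, hi⟩] using hz)
  rwa [Submodule.Quotient.mk_eq_zero] at h3

end RegSeq

/-- Let `A` be a commutative Noetherian local complete intersection ring
(the maximal-ideal-adic completion of `A` is `S/(x 1, …, x c)` for a regular local ring
`S` and a regular sequence `x` in its maximal ideal).  Let `M, N` be finitely generated
`A`-modules such that `M ⊗_A N` has finite length.  Then either `Tor_n^A(M,N) = 0` for
all `n ≫ 0`, or there is `m₀ ≥ 0` such that `Tor_n^A(M,N) ≠ 0` for all even `n ≥ m₀`,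
or for all odd `n ≥ m₀`. -/
theorem stmt_9 (A : Type) [CommRing A] [IsNoetherianRing A] [IsLocalRing A]
    (S : Type) [CommRing S] [IsNoetherianRing S] [IsLocalRing S]
    (hreg : ∃ gen : Finset S, IsLocalRing.maximalIdeal S = Ideal.span ↑gen ∧
      (gen.card : WithBot (WithTop ℕ)) = ringKrullDim S)
    (c : ℕ) (x : Fin c → S)
    (hxm : ∀ i, x i ∈ IsLocalRing.maximalIdeal S)
    (hxreg : RingTheory.Sequence.IsRegular S (List.ofFn x))
    (hcompl : Nonempty
      ((AdicCompletion (IsLocalRing.maximalIdeal A) A) ≃+* S ⧸ Ideal.span (Set.range x)))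
    (M N : Type) [AddCommGroup M] [Module A M] [Module.Finite A M]
    [AddCommGroup N] [Module A N] [Module.Finite A N]
    (hfl : IsFiniteLength A (TensorProduct A M N)) :
    (∃ m₀ : ℕ, ∀ n ≥ m₀, Subsingleton (torGroup A M N n)) ∨
    ∃ m₀ : ℕ, (∀ n ≥ m₀, Even n → Nontrivial (torGroup A M N n)) ∨
      (∀ n ≥ m₀, Odd n → Nontrivial (torGroup A M N n)) := by
  classical
  obtain ⟨gen, hgen, hcard⟩ := hreg
  obtain ⟨φ⟩ := hcompl
  let B := AdicCompletion (IsLocalRing.maximalIdeal A) A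
  have hff : Module.FaithfullyFlat A B := Module.FaithfullyFlat.of_flat_of_isLocalHom
  let f : S →+* B := φ.symm.toRingHom.comp (Ideal.Quotient.mk (Ideal.span (Set.range x)))
  letI : Algebra S B := f.toAlgebra
  have hf : Function.Surjective (algebraMap S B) :=
    φ.symm.surjective.comp Ideal.Quotient.mk_surjective
  -- the regular sequence
  let x' : ℕ → S := fun i => if h : i < c then x ⟨i, h⟩ else 0
  have hx' : ∀ i : Fin c, x' i = x i := fun i => by simp [x']
  have hxspan : CISub x' c S = Ideal.span (Set.range x) := by
    rw [CISub_eq_span]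
    congr 1
    ext s
    simp only [Set.mem_image, Finset.coe_range, Set.mem_Iio, Set.mem_range]
    constructor
    · rintro ⟨j, hj, rfl⟩
      exact ⟨⟨j, hj⟩, (hx' ⟨j, hj⟩).symm⟩
    · rintro ⟨j, rfl⟩
      exact ⟨j, j.2, hx' j⟩
  have hker : ∀ s, algebraMap S B s = 0 ↔ s ∈ CISub x' c S := by
    intro s
    rw [hxspan, ← Ideal.Quotient.eq_zero_iff_mem]
    change φ.symm (Ideal.Quotient.mk _ s) = 0 ↔ _
    exact map_eq_zero_iff φ.symm φ.symm.injective
  -- the regular system of parameters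
  let y : ℕ → S := fun i => if h : i < gen.card then (gen.equivFin.symm ⟨i, h⟩ : S) else 0
  have hym : CISub y gen.card S = IsLocalRing.maximalIdeal S := by
    rw [CISub_eq_span, hgen]
    congr 1
    ext s
    simp only [Set.mem_image, Finset.coe_range, Set.mem_Iio, Finset.mem_coe]
    constructor
    · rintro ⟨j, hj, rfl⟩
      simp [y, hj]
    · intro hs
      exact ⟨gen.equivFin ⟨s, hs⟩, (gen.equivFin ⟨s, hs⟩).2, by simp [y]⟩
  have hm : (IsLocalRing.maximalIdeal S).map (algebraMap S B) ≤
      (IsLocalRing.maximalIdeal A).map (algebraMap A B) := by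
    rw [← AdicCompletion.maximalIdeal_eq_map, Ideal.map_le_iff_le_comap]
    have : ((IsLocalRing.maximalIdeal B).comap (algebraMap S B)).IsMaximal :=
      Ideal.comap_isMaximal_of_surjective _ hf
    exact (IsLocalRing.eq_maximalIdeal this).ge
  obtain ⟨K, hK⟩ := CI_final (A := A) (B := B) x' c
    (CIReg_of_isRegular c x x' hx' hxreg.toIsWeaklyRegular) hf hker y gen.card
    (CI_regular y gen.card hym hcard.le) hym hm M N hfl
  have hprop : ∀ n ≥ K, Subsingleton (torGroup A M N n) →
      ∀ k, Subsingleton (torGroup A M N (n + 2 * k)) := by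
    intro n hn h k
    induction k with
    | zero => exact h
    | succ k ih => exact hK (n + 2 * k) (by omega) ih
  by_cases hE : ∃ n ≥ K, Even n ∧ Subsingleton (torGroup A M N n)
  · by_cases hO : ∃ n ≥ K, Odd n ∧ Subsingleton (torGroup A M N n)
    · left
      obtain ⟨a, ha, hae, has⟩ := hE
      obtain ⟨b, hb, hbo, hbs⟩ := hO
      refine ⟨a + b, fun n hn => ?_⟩
      rcases Nat.even_or_odd n with h | h
      · obtain ⟨k, hk⟩ : ∃ k, n = a + 2 * k := by
          obtain ⟨u, hu⟩ := h
          obtain ⟨v, hv⟩ := hae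
          exact ⟨u - v, by omega⟩
        rw [hk]; exact hprop a ha has k
      · obtain ⟨k, hk⟩ : ∃ k, n = b + 2 * k := by
          obtain ⟨u, hu⟩ := h
          obtain ⟨v, hv⟩ := hbo
          exact ⟨u - v, by omega⟩
        rw [hk]; exact hprop b hb hbs k
    · right
      refine ⟨K, Or.inr fun n hn ho => ?_⟩
      rw [← not_subsingleton_iff_nontrivial]
      exact fun h => hO ⟨n, hn, ho, h⟩
  · right
    refine ⟨K, Or.inl fun n hn he => ?_⟩
    rw [← not_subsingleton_iff_nontrivial]
    exact fun h => hE ⟨n, hn, he, h⟩
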